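/- arXiv:2409.18123 — 2 statements merged into one kernel-verified Lean document; each statement's English description precedes it below -/
import Mathlib

section
/- Let M be a Coxeter matrix on a finite set S with at least 2 elements such that for all s ≠ t one has M s t ≥ 3 and M s t ≠ 0 (large type and free of infinity), and such that there are no three pairwise distinct s, t, u ∈ S with M s t = M t u = M s u = 3 (hyperbolic type). Then the Artin group A[M] has property R_∞. -/
/-- Two elements `g h` of a group `G` are `φ`-twisted conjugate if there is `x : G`
with `h = x * g * (φ x)⁻¹`. -/
def TwistedConj {G : Type*} [Group G] (φ : G ≃* G) (g h : G) : Prop :=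
  ∃ x : G, h = x * g * (φ x)⁻¹

/-- `R(φ) = ∞`: the set of `φ`-twisted conjugacy classes is infinite. -/
def ReidemeisterInfinite {G : Type*} [Group G] (φ : G ≃* G) : Prop :=
  Infinite (Quot (TwistedConj φ))

/-- A group `G` has property `R_∞` if `R(φ) = ∞` for every automorphism `φ` of `G`. -/
def PropertyRInfinity (G : Type*) [Group G] : Prop :=
  ∀ φ : G ≃* G, ReidemeisterInfinite φ

/-- `M` is a Coxeter matrix on `S`: symmetric, with `M s s = 1` and `M s t ≠ 1` off the
diagonal (the value `0` encodes the label `∞`). -/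
def IsCoxeterMatrix {S : Type*} (M : S → S → ℕ) : Prop :=
  (∀ s t, M s t = M t s) ∧ (∀ s, M s s = 1) ∧ (∀ s t, s ≠ t → M s t ≠ 1)

/-- The alternating word `Π(s,t,m) = s t s t ⋯` of length `m`, as an element
of the free group. -/
def altWord {S : Type*} (s t : S) (m : ℕ) : FreeGroup S :=
  ((List.range m).map (fun k => if k % 2 = 0 then FreeGroup.of s else FreeGroup.of t)).prod

/-- The Artin relations associated with a Coxeter matrix `M`: for every pair `s ≠ t`
with `M s t = m ≥ 2` the relation `Π(s,t,m) = Π(t,s,m)`; pairs with `M s t = 0`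
contribute no relation. -/
def artinRels {S : Type*} (M : S → S → ℕ) : Set (FreeGroup S) :=
  { r | ∃ s t : S, s ≠ t ∧ 2 ≤ M s t ∧
      r = altWord s t (M s t) * (altWord t s (M s t))⁻¹ }

/-- The Artin group of the Coxeter matrix `M`. -/
abbrev ArtinGroup {S : Type*} (M : S → S → ℕ) : Type _ := PresentedGroup (artinRels M)

/-- The image `t_s` in the Artin group of the standard generator `s`. -/
abbrev artinGen {S : Type*} (M : S → S → ℕ) (s : S) : ArtinGroup M :=
  PresentedGroup.of (rels := artinRels M) s


set_option linter.unusedSectionVars false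

/-- The properties of a finite group that are used as targets of detecting maps. -/
structure RTarget (B : Type) [Group B] : Prop where
  fin : Finite B
  simple : IsSimpleGroup B
  perf : commutator B = ⊤
  noSurj : ∀ α : B →* B, Function.Injective α → ¬ Function.Surjective (fun x => x * (α x)⁻¹)
  gen : ∃ b : Bool → B, Subgroup.closure {b false ^ 2, b true ^ 2} = ⊤

theorem noSurj_of_conj {B : Type*} [Group B] [Finite B] (α : B →* B)
    (c : B) (hc : c ≠ 1) (h : IsConj c (α c)) :
    ¬ Function.Surjective (fun x => x * (α x)⁻¹) := by
  intro hs
  obtain ⟨u, hu⟩ := isConj_iff.1 h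
  have hi : Function.Injective (fun x : B => x * (α x)⁻¹) := Finite.injective_iff_surjective.2 hs
  obtain ⟨x, hx⟩ := hs u⁻¹
  have key : x⁻¹ * c * x = 1 := by
    apply hi
    simp only [map_one, inv_one, mul_one]
    have hu' : u = α x * x⁻¹ := by
      have : (x * (α x)⁻¹)⁻¹ = u := by
        simp only at hx
        rw [hx, inv_inv]
      rw [← this]; group
    rw [map_mul, map_mul, ← hu, hu', map_inv]
    group
  apply hc
  have : c = x * (x⁻¹ * c * x) * x⁻¹ := by group
  rw [this, key]; group

abbrev AX (p : ℕ) := ZMod p ⊕ Bool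

section
variable (p : ℕ) [Fact p.Prime]

theorem AX_card : Fintype.card (AX p) = p + 2 := by
  simp [AX, ZMod.card]

theorem alt_noSurj (hp : 3 ≤ p) (α : alternatingGroup (AX p) →* alternatingGroup (AX p))
    (hα : Function.Injective α) : ¬ Function.Surjective (fun x => x * (α x)⁻¹) := by
  have hP : p.Prime := Fact.out
  have hcard := AX_card p
  have hdvd : p ∣ Nat.card (alternatingGroup (AX p)) := by
    rw [Nat.card_eq_fintype_card]
    have : Nontrivial (AX p) := ⟨Sum.inr false, Sum.inr true, by simp⟩
    have h2 := two_mul_card_alternatingGroup (α := AX p)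
    have h3 : p ∣ 2 * Fintype.card (alternatingGroup (AX p)) := by
      rw [h2, Fintype.card_perm, hcard]
      exact (Nat.Prime.dvd_factorial hP).2 (by omega)
    rcases (Nat.Prime.dvd_mul hP).1 h3 with h | h
    · have := Nat.le_of_dvd (by norm_num) h
      omega
    · exact h
  obtain ⟨c, hc⟩ := exists_prime_orderOf_dvd_card' p hdvd
  have key : ∀ d : alternatingGroup (AX p), orderOf d = p →
      (d : Equiv.Perm (AX p)).cycleType = {p} ∧ (d : Equiv.Perm (AX p)).support.card = p := by
    intro d hd
    have hd' : orderOf (d : Equiv.Perm (AX p)) = p := by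
      rw [Subgroup.orderOf_coe, hd]
    have hle : (d : Equiv.Perm (AX p)).support.card ≤ p + 2 := by
      rw [← hcard]; exact Finset.card_le_univ _
    have hcyc : (d : Equiv.Perm (AX p)).IsCycle := by
      apply Equiv.Perm.isCycle_of_prime_order
      · rw [hd']; exact hP
      · rw [hd']; omega
    have h1 := hcyc.orderOf
    rw [hd'] at h1
    exact ⟨by rw [hcyc.cycleType, ← h1], h1.symm⟩
  apply noSurj_of_conj α c
  · rintro rfl
    rw [orderOf_one] at hc
    exact hP.one_lt.ne hc
  · obtain ⟨h1, h2⟩ := key c hc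
    obtain ⟨h3, h4⟩ := key (α c) (by rw [orderOf_injective α hα, hc])
    apply alternatingGroup.isConj_of
    · exact Equiv.Perm.isConj_of_cycleType_eq (by rw [h1, h3])
    · omega

open Equiv

/-- rotation -/
def rotP : Perm (AX p) := Equiv.sumCongr (Equiv.addRight (1 : ZMod p)) (Equiv.refl Bool)

theorem rotP_pow (n : ℕ) (x : ZMod p) : ((rotP p) ^ n) (Sum.inl x) = Sum.inl (x + n) := by
  induction n generalizing x with
  | zero => simp
  | succ n ih => rw [pow_succ, Perm.mul_apply]
                 simp [rotP]
                 change (rotP p ^ n) (Sum.inl (x+1)) = _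
                 rw [ih]; congr 1; ring

theorem rotP_pow' (n : ℕ) (x : Bool) : ((rotP p) ^ n) (Sum.inr x) = Sum.inr x := by
  induction n with
  | zero => simp
  | succ n ih => rw [pow_succ, Perm.mul_apply]; simpa [rotP] using ih

theorem rotP_pow_p : (rotP p) ^ p = 1 := by
  ext x
  rcases x with x | x
  · rw [rotP_pow]; simp
  · rw [rotP_pow']; simp

theorem sign_one_of_odd {X : Type*} [Fintype X] [DecidableEq X] (σ : Perm X) (n : ℕ) (hn : Odd n)
    (h : σ ^ n = 1) : σ ∈ alternatingGroup X := by
  rw [Perm.mem_alternatingGroup]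
  have := congrArg Perm.sign h
  rw [map_pow, map_one] at this
  obtain ⟨k, rfl⟩ := hn
  rcases Int.units_eq_one_or (Perm.sign σ) with h | h
  · exact h
  · rw [h, pow_succ, pow_mul] at this
    simp at this
    

/-- three cycle -/
def tri (i : ZMod p) : Perm (AX p) :=
  swap (Sum.inl i) (Sum.inr false) * swap (Sum.inl i) (Sum.inr true)

theorem tri_conj (g : Perm (AX p)) (i : ZMod p) :
   g * tri p i * g⁻¹ = swap (g (Sum.inl i)) (g (Sum.inr false)) * swap (g (Sum.inl i)) (g (Sum.inr true)) := by
  rw [swap_apply_apply, swap_apply_apply, tri]; group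

theorem tri_eq (i : ZMod p) :
    tri p i = swap (Sum.inr false) (Sum.inr true) * swap (Sum.inl i) (Sum.inr false) := by
  have h : swap (Sum.inl i : AX p) (Sum.inr false) (Sum.inr true) = Sum.inr true :=
    swap_apply_of_ne_of_ne (by simp) (by simp)
  have := mul_swap_eq_swap_mul (swap (Sum.inl i : AX p) (Sum.inr false)) (Sum.inl i) (Sum.inr true)
  rw [h] at this
  rw [tri, this, swap_apply_left]

theorem tri_pow (i : ZMod p) : tri p i ^ 3 = 1 := by
  have e2 : tri p i = swap (Sum.inl i) (Sum.inr true) * swap (Sum.inr false) (Sum.inr true) := by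
    have := mul_swap_eq_swap_mul (swap (Sum.inl i : AX p) (Sum.inr true)) (Sum.inr false) (Sum.inr true)
    rw [swap_apply_right, swap_apply_of_ne_of_ne (by simp) (by simp)] at this
    rw [this, tri, swap_comm (Sum.inl i) (Sum.inr false)]
  have e3 : tri p i * (tri p i * tri p i) = 1 := by
    conv_lhs => enter [2,2]; rw [tri]
    conv_lhs => enter [2,1]; rw [tri_eq]
    rw [e2]
    simp [mul_assoc]
  rw [pow_succ, pow_succ, pow_one, mul_assoc, e3]

theorem star_top {X : Type*} [Fintype X] [DecidableEq X] (H : Subgroup (Perm X)) (a : X)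
    (h : ∀ x, swap a x ∈ H) : H = ⊤ := by
  rw [eq_top_iff, ← Perm.closure_isSwap, Subgroup.closure_le]
  rintro σ ⟨x, y, hxy, rfl⟩
  by_cases hx : a = x
  · subst hx; exact h y
  by_cases hy : a = y
  · subst hy; rw [swap_comm]; exact h x
  have := swap_apply_apply (swap a x) a y
  rw [swap_apply_left, swap_apply_of_ne_of_ne (Ne.symm hy) (Ne.symm hxy)] at this
  rw [this]
  exact H.mul_mem (H.mul_mem (h x) (h y)) (H.inv_mem (h x))

theorem closure_tri (hp : 3 ≤ p) :
    alternatingGroup (AX p) ≤ Subgroup.closure (Set.range (tri p)) := by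
  set K := Subgroup.closure (Set.range (tri p)) with hK
  have hmem : ∀ i, tri p i ∈ K := fun i => Subgroup.subset_closure ⟨i, rfl⟩
  have hN : Subgroup.normalizer (K : Set (Perm (AX p))) = ⊤ := by
    have hab : swap (Sum.inr false : AX p) (Sum.inr true) ∈ Subgroup.normalizer (K : Set (Perm (AX p))) := by
      have hle : ∀ x ∈ K, swap (Sum.inr false : AX p) (Sum.inr true) * x * (swap (Sum.inr false : AX p) (Sum.inr true))⁻¹ ∈ K := by
        intro x hx
        have : K ≤ K.comap (MulAut.conj (swap (Sum.inr false : AX p) (Sum.inr true))).toMonoidHom := by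
          rw [hK, Subgroup.closure_le]
          rintro _ ⟨i, rfl⟩
          simp only [SetLike.mem_coe, Subgroup.mem_comap]
          change swap (Sum.inr false : AX p) (Sum.inr true) * tri p i * (swap (Sum.inr false : AX p) (Sum.inr true))⁻¹ ∈ K
          rw [tri_conj, swap_apply_left, swap_apply_right, swap_apply_of_ne_of_ne (by simp) (by simp)]
          have := K.inv_mem (hmem i)
          rw [tri, mul_inv_rev, swap_inv, swap_inv] at this
          exact this
        exact this hx
      rw [Subgroup.mem_normalizer_iff]
      intro x
      refine ⟨hle x, fun h => ?_⟩
      have := hle _ h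
      rw [swap_inv] at this
      simpa [mul_assoc] using this
    apply star_top _ (Sum.inr false)
    have hKN : K ≤ Subgroup.normalizer (K : Set (Perm (AX p))) := Subgroup.le_normalizer
    rintro (i | b)
    · have e : swap (Sum.inr false) (Sum.inr true) * tri p i = swap (Sum.inr false) (Sum.inl i)  := by
        rw [tri_eq, ← mul_assoc, swap_mul_self, one_mul, swap_comm]
      rw [← e]
      exact Subgroup.mul_mem _ hab (hKN (hmem i))
    · cases b
      · rw [swap_self]; exact Subgroup.one_mem _
      · exact hab
  have : K.Normal := Subgroup.normalizer_eq_top_iff.1 hN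
  apply Perm.alternatingGroup_le_of_normal
  · rw [Nat.card_eq_fintype_card, AX_card]; omega
  · refine ⟨⟨1, ⟨tri p 0, hmem 0⟩, ?_⟩⟩
    intro h
    have h1 := congrArg (fun x : K => (x : Perm (AX p)) (Sum.inl 0)) h
    simp only [tri, Subgroup.coe_one, Perm.one_apply, Perm.mul_apply, swap_apply_left] at h1
    rw [swap_apply_of_ne_of_ne (by simp) (by simp)] at h1
    simp at h1

theorem alt_gen (hp : 3 ≤ p) : ∃ b : Bool → alternatingGroup (AX p),
    Subgroup.closure {b false ^ 2, b true ^ 2} = ⊤ := by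
  have hP : p.Prime := Fact.out
  have hodd : Odd p := hP.odd_of_ne_two (by omega)
  refine ⟨fun i => if i then ⟨tri p 0, sign_one_of_odd _ 3 (by decide) (tri_pow p 0)⟩ else
    ⟨rotP p, sign_one_of_odd _ p hodd (rotP_pow_p p)⟩, ?_⟩
  simp only [Bool.false_eq_true, if_false, if_true]
  set K : Subgroup (alternatingGroup (AX p)) := Subgroup.closure _ with hK
  have h1 : (⟨tri p 0, sign_one_of_odd _ 3 (by decide) (tri_pow p 0)⟩ : alternatingGroup (AX p)) ∈ K := by
    have : (⟨tri p 0, sign_one_of_odd _ 3 (by decide) (tri_pow p 0)⟩ : alternatingGroup (AX p))^2 ∈ K :=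
      Subgroup.subset_closure (by simp)
    have h2 := K.pow_mem this 2
    rw [← pow_mul] at h2
    convert h2 using 1
    ext1
    simp only [Subgroup.coe_pow]
    rw [show 2 * 2 = 3 + 1 from rfl, pow_succ, tri_pow, one_mul]
  have h2 : (⟨rotP p, sign_one_of_odd _ p hodd (rotP_pow_p p)⟩ : alternatingGroup (AX p)) ∈ K := by
    have : (⟨rotP p, sign_one_of_odd _ p hodd (rotP_pow_p p)⟩ : alternatingGroup (AX p))^2 ∈ K :=
      Subgroup.subset_closure (by simp)
    have h2 := K.pow_mem this ((p+1)/2)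
    rw [← pow_mul] at h2
    convert h2 using 1
    ext1
    simp only [Subgroup.coe_pow]
    have : 2 * ((p + 1)/2) = p + 1 := by
      obtain ⟨k, rfl⟩ := hodd; omega
    rw [this, pow_succ, rotP_pow_p, one_mul]
  have h3 : Subgroup.closure (Set.range (tri p)) ≤ K.map (alternatingGroup (AX p)).subtype := by
    rw [Subgroup.closure_le]
    rintro _ ⟨i, rfl⟩
    have m1 : tri p 0 ∈ K.map (alternatingGroup (AX p)).subtype := ⟨_, h1, rfl⟩
    have m2 : rotP p ∈ K.map (alternatingGroup (AX p)).subtype := ⟨_, h2, rfl⟩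
    have : tri p i = rotP p ^ i.val * tri p 0 * (rotP p ^ i.val)⁻¹ := by
      rw [tri_conj, rotP_pow, rotP_pow', rotP_pow']
      simp [tri]
    rw [this]
    exact Subgroup.mul_mem _ (Subgroup.mul_mem _ (Subgroup.pow_mem _ m2 _) m1)
      (Subgroup.inv_mem _ (Subgroup.pow_mem _ m2 _))
  rw [eq_top_iff]
  intro x _
  obtain ⟨y, hy, hyx⟩ := h3 (closure_tri p hp x.2)
  have : y = x := Subtype.ext hyx
  rwa [← this]

theorem alt_RTarget (hp : 3 ≤ p) : RTarget (alternatingGroup (AX p)) := by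
  have h5 : 5 ≤ Nat.card (AX p) := by rw [Nat.card_eq_fintype_card, AX_card]; omega
  exact ⟨inferInstance, alternatingGroup.isSimpleGroup h5, commutator_alternatingGroup_eq_top h5,
    alt_noSurj p hp, alt_gen p hp⟩

end

theorem exists_RTarget (n : ℕ) : ∃ (B : Type) (_ : Group B), RTarget B ∧ n < Nat.card B := by
  obtain ⟨p, hp, hP⟩ := Nat.exists_infinite_primes (n + 3)
  have : Fact p.Prime := ⟨hP⟩
  refine ⟨alternatingGroup (AX p), inferInstance, alt_RTarget p (by omega), ?_⟩
  have : Nontrivial (AX p) := ⟨Sum.inr false, Sum.inr true, by simp⟩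
  have h2 := two_mul_card_alternatingGroup (α := AX p)
  rw [Fintype.card_perm, AX_card, Nat.factorial_succ, Nat.factorial_succ] at h2
  rw [Nat.card_eq_fintype_card]
  have : 0 < p.factorial := Nat.factorial_pos p
  have h4 : (p + 1) * 1 ≤ (p+1) * p.factorial := Nat.mul_le_mul_left _ this
  have h5 : 2 * ((p + 1) * p.factorial) ≤ (p+1+1) * ((p+1) * p.factorial) := Nat.mul_le_mul_right _ (by omega)
  omega


section partB

theorem finite_monoidHom {G F : Type*} [Group G] [Group F] [Finite F] [hG : Group.FG G] :
    Finite (G →* F) := by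
  obtain ⟨S, hS, hfin⟩ := Group.fg_iff.1 hG
  have : Finite S := hfin
  apply Finite.of_injective (fun (f : G →* F) (s : S) => f s)
  intro f g h
  apply MonoidHom.eq_of_eqOn_dense hS
  intro x hx
  exact congrFun h ⟨x, hx⟩

theorem finite_index_eq {G : Type*} [Group G] [hG : Group.FG G] (d : ℕ) (hd : d ≠ 0) :
    {H : Subgroup G | H.index = d}.Finite := by
  have := finite_monoidHom (G := G) (F := Equiv.Perm (Fin d))
  apply Set.Finite.subset (Set.finite_range (fun q : (G →* Equiv.Perm (Fin d)) × Fin d =>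
    (MulAction.stabilizer (Equiv.Perm (Fin d)) q.2).comap q.1))
  intro H hH
  simp only [Set.mem_ofPred_eq] at hH
  have hfi : H.FiniteIndex := ⟨by rw [hH]; exact hd⟩
  have e : (G ⧸ H) ≃ Fin d := Finite.equivFinOfCardEq hH
  refine ⟨⟨(e.permCongrHom.toMonoidHom).comp (MulAction.toPermHom G (G ⧸ H)), e (1 : G)⟩, ?_⟩
  ext g
  have h1 := MulAction.stabilizer_quotient H
  have h2 : g ∈ H ↔ g • ((1 : G) : G ⧸ H) = ((1 : G) : G ⧸ H) := by
    conv_lhs => rw [← h1]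
    exact MulAction.mem_stabilizer_iff
  rw [h2]
  simp [Subgroup.mem_comap, MulAction.mem_stabilizer_iff, Equiv.permCongrHom]

theorem TwistedConj.symm' {G : Type*} [Group G] {φ : G ≃* G} {g h : G}
    (H : TwistedConj φ g h) : TwistedConj φ h g := by
  obtain ⟨x, rfl⟩ := H
  exact ⟨x⁻¹, by rw [map_inv]; group⟩

theorem twistedConj_of_quot {G : Type*} [Group G] {φ : G ≃* G} {g h : G}
    (H : Quot.mk (TwistedConj φ) g = Quot.mk (TwistedConj φ) h) : TwistedConj φ g h := by
  have hE : Equivalence (TwistedConj φ) :=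
    ⟨fun x => ⟨1, by simp⟩, fun h => h.symm', by
      rintro a b c ⟨x, rfl⟩ ⟨y, rfl⟩
      exact ⟨y * x, by rw [map_mul]; group⟩⟩
  have := Quot.eqvGen_exact H
  rwa [hE.eqvGen_iff] at this

/-- restriction of an automorphism to a characteristic subgroup -/
def restrAut {G : Type*} [Group G] (K : Subgroup G) (φ : G ≃* G)
    (h : ∀ x, x ∈ K ↔ φ x ∈ K) : K ≃* K where
  toFun x := ⟨φ x, (h x).1 x.2⟩
  invFun x := ⟨φ.symm x, (h _).2 (by simp)⟩
  left_inv x := by simp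
  right_inv x := by simp
  map_mul' x y := by ext; simp

theorem infinite_of_restr {G : Type*} [Group G] (K : Subgroup G) [K.Normal] [K.FiniteIndex]
    (φ : G ≃* G) (h : ∀ x, x ∈ K ↔ φ x ∈ K)
    (hinf : Infinite (Quot (TwistedConj (restrAut K φ h)))) : Infinite (Quot (TwistedConj φ)) := by
  by_contra hfin
  rw [not_infinite_iff_finite] at hfin
  apply hinf.not_finite
  have : Finite (G ⧸ K) := inferInstance
  classical
  let F : Quot (TwistedConj φ) × (G ⧸ K) → Quot (TwistedConj (restrAut K φ h)) := fun q =>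
    if hq : q.2.out * q.1.out * (φ q.2.out)⁻¹ ∈ K then Quot.mk _ ⟨_, hq⟩ else Quot.mk _ 1
  apply Finite.of_surjective F
  intro c
  induction c using Quot.ind with | _ g
  obtain ⟨x, hx⟩ : TwistedConj φ (Quot.mk (TwistedConj φ) (g : G)).out (g : G) :=
    twistedConj_of_quot (by rw [Quot.out_eq])
  refine ⟨⟨Quot.mk _ (g : G), (x : G ⧸ K)⟩, ?_⟩
  set r := (Quot.mk (TwistedConj φ) (g : G)).out with hr
  set t := ((x : G ⧸ K)).out with ht
  have hk : x * t⁻¹ ∈ K := by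
    have h1 : x⁻¹ * t ∈ K := by
      rw [← QuotientGroup.eq, ht, QuotientGroup.out_eq']
    have h2 := Subgroup.Normal.conj_mem ‹K.Normal› _ (K.inv_mem h1) x
    convert h2 using 1; group
  have hq : t * r * (φ t)⁻¹ ∈ K := by
    have : t * r * (φ t)⁻¹ = (x * t⁻¹)⁻¹ * g * φ (x * t⁻¹) := by
      rw [hx, map_mul, map_inv]; group
    rw [this]
    exact K.mul_mem (K.mul_mem (K.inv_mem hk) g.2) ((h _).1 hk)
  have : F (Quot.mk _ (g : G), (x : G ⧸ K)) = Quot.mk _ ⟨t * r * (φ t)⁻¹, hq⟩ := by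
    simp only [F]
    rw [dif_pos hq]
  rw [this]
  apply Quot.sound
  refine ⟨⟨x * t⁻¹, hk⟩, ?_⟩
  ext
  simp only [restrAut, Subgroup.coe_mul, MulEquiv.coe_mk, Equiv.coe_fn_mk, Subgroup.coe_inv]
  rw [hx, map_mul, map_inv]; group

/-- twisted product -/
def twProd {K B : Type*} [Group K] [Group B] (ψ : MulAut K) (f : K →* B) (n : ℕ) (g : K) : B :=
  ((List.range n).map (fun j => f ((ψ ^ j) g))).prod

theorem twProd_tw {K B : Type*} [Group K] [Group B] (ψ : MulAut K) (f : K →* B) (n : ℕ) (g x : K) :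
    twProd ψ f n (x * g * (ψ x)⁻¹) = f x * twProd ψ f n g * (f ((ψ ^ n) x))⁻¹ := by
  induction n with
  | zero => simp [twProd]
  | succ n ih =>
    have hs : ∀ g, twProd ψ f (n+1) g = twProd ψ f n g * f ((ψ ^ n) g) := by
      intro g
      rw [twProd, List.range_succ, List.map_append, List.prod_append, ← twProd]
      simp
    rw [hs, ih, hs]
    simp only [List.map_cons, List.map_nil, List.prod_singleton, map_mul, map_inv]
    rw [pow_succ, MulAut.mul_apply]
    group

theorem prime_inf {K B : Type*} [Group K] [Group B] (f : K →* B)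
    (hperf : commutator B = ⊤) (J₁ J₂ : Subgroup K) [J₁.Normal] [J₂.Normal]
    (h₁ : J₁.map f = ⊤) (h₂ : J₂.map f = ⊤) : (J₁ ⊓ J₂).map f = ⊤ := by
  have h : (⊤ : Subgroup B) = ⁅J₁.map f, J₂.map f⁆ := by
    rw [h₁, h₂, ← commutator_def, hperf]
  rw [eq_top_iff, h, ← Subgroup.map_commutator]
  exact Subgroup.map_mono (Subgroup.commutator_le_inf J₁ J₂)

theorem prime_finset {K B ι : Type*} [Group K] [Group B] (f : K →* B)
    (hf : Function.Surjective f)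
    (hperf : commutator B = ⊤) (J : ι → Subgroup K) (hN : ∀ i, (J i).Normal) (s : Finset ι)
    (h : ∀ i ∈ s, (J i).map f = ⊤) : ∀ b : B, ∃ g : K, (∀ i ∈ s, g ∈ J i) ∧ f g = b := by
  classical
  suffices H : (⨅ i ∈ s, J i).map f = ⊤ ∧ (⨅ i ∈ s, J i).Normal by
    intro b
    have : b ∈ (⨅ i ∈ s, J i).map f := by rw [H.1]; trivial
    obtain ⟨g, hg, rfl⟩ := this
    refine ⟨g, ?_, rfl⟩
    simpa [Subgroup.mem_iInf] using hg
  induction s using Finset.induction_on with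
  | empty => 
    simp only [Finset.notMem_empty, iInf_false, iInf_top]
    exact ⟨Subgroup.map_top_of_surjective f hf, inferInstance⟩
  | insert a s ha ih =>
    rw [Finset.iInf_insert]
    obtain ⟨h1, h2⟩ := ih (fun i hi => h i (Finset.mem_insert_of_mem hi))
    have := hN a
    exact ⟨prime_inf f hperf _ _ (h a (Finset.mem_insert_self _ _)) h1, inferInstance⟩

theorem map_top_of_not_le {K B : Type*} [Group K] [Group B] [IsSimpleGroup B] (f : K →* B)
    (hf : Function.Surjective f) (J : Subgroup K) (hN : J.Normal) (h : ¬ J ≤ f.ker) :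
    J.map f = ⊤ := by
  rcases (hN.map f hf).eq_bot_or_eq_top with h1 | h1
  · exact absurd ((Subgroup.map_eq_bot_iff J).1 h1) h
  · exact h1

theorem exists_period {K B : Type*} [Group K] [Group.FG K] [Group B] [Finite B]
    (ψ : MulAut K) (f : K →* B) (hf : Function.Surjective f) :
    ∃ L : ℕ, 0 < L ∧ (∃ α : B →* B, Function.Injective α ∧ ∀ x, α (f x) = f ((ψ ^ L) x)) ∧
      ∀ j, 0 < j → j < L → (f.comp (ψ ^ j).toMonoidHom).ker ≠ f.ker := by
  classical
  have hsurj : ∀ j : ℕ, Function.Surjective (f.comp (ψ ^ j).toMonoidHom) := fun j =>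
    hf.comp (ψ ^ j).surjective
  have hidx : ∀ j : ℕ, (f.comp (ψ ^ j).toMonoidHom).ker.index = Nat.card B := by
    intro j
    rw [Subgroup.index_ker, MonoidHom.range_eq_top.2 (hsurj j)]
    simp
  have hfin := finite_index_eq (G := K) (Nat.card B) Nat.card_pos.ne'
  have hex : ∃ L : ℕ, 0 < L ∧ (f.comp (ψ ^ L).toMonoidHom).ker = f.ker := by
    have := Set.infinite_univ.exists_lt_map_eq_of_mapsTo
      (f := fun j : ℕ => (f.comp (ψ ^ j).toMonoidHom).ker)
      (fun j _ => hidx j) hfin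
    obtain ⟨a, -, b, -, hab, h⟩ := this
    refine ⟨b - a, by omega, ?_⟩
    ext x
    have h1 := SetLike.ext_iff.1 h (((ψ ^ a)⁻¹ : MulAut K) x)
    simp only [MonoidHom.mem_ker, MonoidHom.comp_apply, MulEquiv.coe_toMonoidHom] at h1 ⊢
    rw [← MulAut.mul_apply, ← MulAut.mul_apply, mul_inv_cancel, ← pow_sub _ hab.le] at h1
    exact h1.symm
  refine ⟨Nat.find hex, (Nat.find_spec hex).1, ?_, ?_⟩
  · have hk := (Nat.find_spec hex).2
    set L := Nat.find hex
    refine ⟨MonoidHom.liftOfSurjective f hf ⟨f.comp (ψ ^ L).toMonoidHom, hk.ge⟩, ?_, ?_⟩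
    · rw [injective_iff_map_eq_one]
      intro b hb
      obtain ⟨x, rfl⟩ := hf b
      have : (f.comp (ψ ^ L).toMonoidHom) x = 1 := by
        rw [← hb]
        exact (MonoidHom.liftOfRightInverse_comp_apply _ _ _ ⟨f.comp (ψ ^ L).toMonoidHom, hk.ge⟩ x).symm
      have h2 : x ∈ f.ker := hk ▸ this
      exact h2
    · intro x
      exact MonoidHom.liftOfRightInverse_comp_apply _ _ _ ⟨f.comp (ψ ^ L).toMonoidHom, hk.ge⟩ x
  · intro j hj hjL h
    exact Nat.find_min hex hjL ⟨hj, h⟩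

/-- A surjection onto a target. -/
structure RTgt (K : Type*) [Group K] where
  B : Type
  grp : Group B
  tgt : RTarget B
  f : K →* B
  surj : Function.Surjective f

attribute [instance] RTgt.grp

theorem eq_of_le_index {K : Type*} [Group K] {H J : Subgroup K} (h : H ≤ J)
    (hi : H.index = J.index) (h0 : H.index ≠ 0) : H = J := by
  apply le_antisymm h
  rw [← Subgroup.relIndex_eq_one]
  have := Subgroup.relIndex_mul_index h
  rw [hi] at this
  exact Nat.eq_of_mul_eq_mul_right (Nat.pos_of_ne_zero (hi ▸ h0)) (by rw [this, one_mul])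

theorem core_infinite {K : Type*} [Group K] [Group.FG K] (ψ : K ≃* K)
    (h : ∀ n : ℕ, ∃ T : RTgt K, n < Nat.card T.B) : Infinite (Quot (TwistedConj ψ)) := by
  classical
  choose T0 hT0 using h
  have htend : Filter.Tendsto (fun n => Nat.card (T0 n).B) Filter.atTop Filter.atTop :=
    Filter.tendsto_atTop_mono (fun n => (hT0 n).le) Filter.tendsto_id
  obtain ⟨e, -, hmono⟩ := Filter.strictMono_subseq_of_tendsto_atTop htend
  let T : ℕ → RTgt K := fun n => T0 (e n)
  have hT : StrictMono (fun n => Nat.card (T n).B) := hmono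
  have hBfin : ∀ n, Finite (T n).B := fun n => (T n).tgt.fin
  have hBs : ∀ n, IsSimpleGroup (T n).B := fun n => (T n).tgt.simple
  let ψ' : MulAut K := ψ
  have hper := fun n => exists_period ψ' (T n).f (T n).surj
  choose L hL0 hα hLmin using hper
  choose α hαinj hαf using hα
  have hns := fun n => (T n).tgt.noSurj (α n) (hαinj n)
  simp only [Function.Surjective, not_forall, not_exists] at hns
  choose b hb using hns
  have hsurj : ∀ i (j : ℕ), Function.Surjective ((T i).f.comp (ψ' ^ j).toMonoidHom) := fun i j =>
    (T i).surj.comp (ψ' ^ j).surjective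
  have hidx : ∀ i (j : ℕ), ((T i).f.comp (ψ' ^ j).toMonoidHom).ker.index = Nat.card (T i).B := by
    intro i j
    rw [Subgroup.index_ker, MonoidHom.range_eq_top.2 (hsurj i j)]
    simp
  have hidx0 : ∀ i, (T i).f.ker.index = Nat.card (T i).B := by
    intro i
    rw [Subgroup.index_ker, MonoidHom.range_eq_top.2 (T i).surj]
    simp
  have hg : ∀ k, ∃ g : K, (∀ i < k, ∀ j < L i, (T i).f ((ψ' ^ j) g) = 1) ∧
      (∀ j, 0 < j → j < L k → (T k).f ((ψ' ^ j) g) = 1) ∧ (T k).f g = b k := by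
    intro k
    obtain ⟨g, hg1, hg2⟩ := prime_finset (T k).f (T k).surj (T k).tgt.perf
      (fun q : (_ : ℕ) × ℕ => ((T q.1).f.comp (ψ' ^ q.2).toMonoidHom).ker)
      (fun q => inferInstance)
      (((Finset.range (k+1)).sigma (fun i => Finset.range (L i))).erase ⟨k, 0⟩) (by
        rintro ⟨i, j⟩ hq
        simp only [Finset.mem_erase, Finset.mem_sigma, Finset.mem_range] at hq
        apply map_top_of_not_le _ (T k).surj _ inferInstance
        intro hle
        simp only at hle
        rcases lt_or_eq_of_le (Nat.lt_succ_iff.1 hq.2.1) with hik | hik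
        · have h1 := Subgroup.index_dvd_of_le hle
          rw [hidx, hidx0] at h1
          have h2 := Nat.le_of_dvd Nat.card_pos h1
          exact absurd (hT hik) (not_lt.2 h2)
        · subst hik
          have hj : 0 < j := by
            rcases Nat.eq_zero_or_pos j with rfl | hj
            · exact absurd rfl hq.1
            · exact hj
          apply hLmin i j hj hq.2.2
          exact eq_of_le_index hle (by rw [hidx, hidx0]) (by rw [hidx]; exact Nat.card_pos.ne')) (b k)
    refine ⟨g, ?_, ?_, hg2⟩
    · intro i hi j hj
      exact hg1 ⟨i, j⟩ (by
        simp only [Finset.mem_erase, Finset.mem_sigma, Finset.mem_range]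
        refine ⟨?_, by omega, hj⟩
        intro h
        have := congrArg Sigma.fst h
        simp only at this
        omega)
    · intro j hj hjL
      exact hg1 ⟨k, j⟩ (by
        simp only [Finset.mem_erase, Finset.mem_sigma, Finset.mem_range]
        refine ⟨?_, by omega, hjL⟩
        intro h
        simp only [Sigma.mk.injEq, heq_eq_eq, true_and] at h
        omega)
  choose g hg1 hg2 hg3 using hg
  apply Infinite.of_injective (fun k : ℕ => Quot.mk (TwistedConj ψ) (g k))
  have main : ∀ i k, i < k → Quot.mk (TwistedConj ψ) (g i) ≠ Quot.mk (TwistedConj ψ) (g k) := by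
    intro i k hik heq
    obtain ⟨x, hx⟩ := (twistedConj_of_quot heq).symm'
    have h1 := twProd_tw ψ' (T i).f (L i) (g k) x
    have e1 : twProd ψ' (T i).f (L i) (g k) = 1 := by
      rw [twProd]
      apply List.prod_eq_one
      simp only [List.mem_map, List.mem_range]
      rintro _ ⟨j, hj, rfl⟩
      exact hg1 k i hik j hj
    have e2 : twProd ψ' (T i).f (L i) (g i) = b i := by
      rw [twProd]
      obtain ⟨l, hl⟩ := Nat.exists_eq_succ_of_ne_zero (hL0 i).ne'
      rw [hl, List.range_succ_eq_map, List.map_cons, List.prod_cons, pow_zero, MulAut.one_apply, hg3,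
        List.prod_eq_one, mul_one]
      simp only [List.mem_map, List.mem_range]
      rintro _ ⟨_, ⟨j, hj, rfl⟩, rfl⟩
      exact hg2 i _ (Nat.succ_pos j) (by omega)
    have hx' : g i = x * g k * (ψ' x)⁻¹ := hx
    rw [← hx', e1, e2, mul_one, ← hαf] at h1
    exact hb i _ h1.symm
  intro i k hik
  rcases lt_trichotomy i k with h | h | h
  · exact absurd hik (main i k h)
  · exact h
  · exact absurd hik.symm (main k i h)

/-- The group virtually maps to a free group with large image. -/
def VLarge (G : Type*) [Group G] : Prop :=
  ∃ N : Subgroup G, N.FiniteIndex ∧ ∃ θ : N →* FreeGroup Bool, ∀ i, (FreeGroup.of i) ^ 2 ∈ θ.range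

theorem propertyRInfinity_of_VLarge {G : Type*} [Group G] [Group.FG G] (h : VLarge G) :
    PropertyRInfinity G := by
  intro φ
  obtain ⟨N, hN, θ, hθ⟩ := h
  set K : Subgroup G := sInf {H : Subgroup G | H.index = N.index} with hK
  have hmem : ∀ (χ : G ≃* G) x, x ∈ K → χ x ∈ K := by
    intro χ x hx
    rw [hK, Subgroup.mem_sInf] at hx ⊢
    intro H hH
    have := hx (H.comap χ.toMonoidHom) (by
      simp only [Set.mem_ofPred_eq] at hH ⊢
      rw [Subgroup.index_comap_of_surjective _ χ.surjective, hH])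
    exact this
  have hiff : ∀ x, x ∈ K ↔ φ x ∈ K := fun x =>
    ⟨hmem φ x, fun h => by simpa using hmem φ.symm _ h⟩
  have hKn : K.Normal := ⟨fun x hx g => by simpa using hmem (MulAut.conj g) x hx⟩
  have hKN : K ≤ N := sInf_le rfl
  have hKf : K.FiniteIndex := by
    have hfin := finite_index_eq (G := G) N.index hN.index_ne_zero
    rw [hK, sInf_eq_iInf']
    have : Finite {H : Subgroup G | H.index = N.index} := hfin
    exact Subgroup.finiteIndex_iInf (fun H => ⟨by rw [H.2]; exact hN.index_ne_zero⟩)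
  apply infinite_of_restr K φ hiff
  apply core_infinite
  intro n
  obtain ⟨B, instB, hB, hcard⟩ := exists_RTarget (n + K.index)
  obtain ⟨b, hb⟩ := hB.gen
  have hfinB := hB.fin
  have hsB := hB.simple
  let f0 : N →* B := (FreeGroup.lift b).comp θ
  have hf0 : Function.Surjective f0 := by
    rw [← MonoidHom.range_eq_top, eq_top_iff, ← hb, Subgroup.closure_le]
    have : ∀ i, b i ^ 2 ∈ f0.range := by
      intro i
      obtain ⟨x, hx⟩ := hθ i
      exact ⟨x, by simp [f0, hx]⟩
    rintro y (rfl | rfl) <;> exact this _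
  have hmap : (K.subgroupOf N).map f0 = ⊤ := by
    apply map_top_of_not_le _ hf0 _ inferInstance
    intro hle
    have h1 := Subgroup.index_dvd_of_le hle
    rw [Subgroup.index_ker, MonoidHom.range_eq_top.2 hf0] at h1
    have h2 : (K.subgroupOf N).index ∣ K.index := ⟨N.index, (Subgroup.relIndex_mul_index hKN).symm⟩
    have h3 := Nat.le_of_dvd (Nat.pos_of_ne_zero hKf.index_ne_zero) (h1.trans h2)
    simp only [Subgroup.card_top] at h3
    omega
  refine ⟨⟨B, instB, hB, f0.comp (Subgroup.inclusion hKN), ?_⟩, by simp only; omega⟩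
  intro y
  have : y ∈ (K.subgroupOf N).map f0 := by rw [hmap]; trivial
  obtain ⟨x, hx, rfl⟩ := this
  exact ⟨⟨x.1, hx⟩, rfl⟩

end partB


section partC

theorem altWord_even {S : Type*} (s t : S) (k : ℕ) :
    altWord s t (2 * k) = (FreeGroup.of s * FreeGroup.of t) ^ k := by
  induction k with
  | zero => simp [altWord]
  | succ k ih =>
    rw [altWord] at ih ⊢
    rw [show 2 * (k + 1) = 2 * k + 1 + 1 by ring, List.range_succ, List.range_succ]
    simp only [List.map_append, List.prod_append, ih, pow_succ]
    have h1 : (2 * k) % 2 = 0 := by omega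
    have h2 : (2 * k + 1) % 2 = 1 := by omega
    simp [h2, mul_assoc]

theorem altWord_odd {S : Type*} (s t : S) (k : ℕ) :
    altWord s t (2 * k + 1) = (FreeGroup.of s * FreeGroup.of t) ^ k * FreeGroup.of s := by
  rw [← altWord_even, altWord, altWord, List.range_succ]
  simp

abbrev FB := FreeGroup Bool

/-- right multiplication on the second coordinate -/
def rmul (X : Type*) (c : FB) : Equiv.Perm (X × FB) := Equiv.prodCongr (Equiv.refl X) (Equiv.mulRight c)

theorem rmul_apply (X : Type*) (c : FB) (x : X) (b : FB) : rmul X c (x, b) = (x, b * c) := rfl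

theorem artin_VLarge {S X : Type*} [Finite X] (M : S → S → ℕ)
    (τ : S → Equiv.Perm (X × FB))
    (hrel : ∀ s t, s ≠ t → FreeGroup.lift τ (altWord s t (M s t)) = FreeGroup.lift τ (altWord t s (M s t)))
    (hcomm : ∀ s c, rmul X c * τ s = τ s * rmul X c) (x0 : X)
    (hgen : ∀ i, ∃ w : FreeGroup S, FreeGroup.lift τ w (x0, 1) = (x0, (FreeGroup.of i)^2)) :
    VLarge (ArtinGroup M) := by
  have hr : ∀ r ∈ artinRels M, FreeGroup.lift τ r = 1 := by
    rintro r ⟨s, t, hst, -, rfl⟩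
    rw [map_mul, map_inv, hrel s t hst, mul_inv_cancel]
  let Φ : ArtinGroup M →* Equiv.Perm (X × FB) := PresentedGroup.toGroup hr
  have hΦ : ∀ w : FreeGroup S, Φ (PresentedGroup.mk _ w) = FreeGroup.lift τ w := fun w => rfl
  have hc : ∀ g c, rmul X c * Φ g = Φ g * rmul X c := by
    intro g c
    obtain ⟨w, rfl⟩ := PresentedGroup.mk_surjective _ g
    rw [hΦ]
    have : (FreeGroup.lift τ).range ≤ Subgroup.centralizer {rmul X c} := by
      apply FreeGroup.range_lift_le
      rintro _ ⟨s, rfl⟩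
      rw [SetLike.mem_coe, Subgroup.mem_centralizer_singleton_iff]
      exact (hcomm s c).symm
    have h2 := this ⟨w, rfl⟩
    rw [Subgroup.mem_centralizer_singleton_iff] at h2
    exact h2.symm
  have hc' : ∀ g x b, Φ g (x, b) = ((Φ g (x, 1)).1, (Φ g (x, 1)).2 * b) := by
    intro g x b
    have := congrArg (fun e : Equiv.Perm (X × FB) => e (x, 1)) (hc g b)
    simp only [Equiv.Perm.mul_apply, rmul_apply, one_mul] at this
    rw [← this]
    rfl
  let N : Subgroup (ArtinGroup M) := 
    { carrier := {g | (Φ g (x0, 1)).1 = x0}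
      one_mem' := by simp
      mul_mem' := by
        intro a b ha hb
        simp only [Set.mem_ofPred_eq] at ha hb ⊢
        rw [map_mul, Equiv.Perm.mul_apply, ← Prod.mk.eta (p := Φ b (x0, 1)), hb, hc', ha]
      inv_mem' := by
        intro a ha
        simp only [Set.mem_ofPred_eq] at ha ⊢
        have h1 : Φ a⁻¹ (Φ a (x0, 1)) = (x0, 1) := by
          rw [← Equiv.Perm.mul_apply, ← map_mul]; simp
        rw [← Prod.mk.eta (p := Φ a (x0, 1)), ha, hc'] at h1
        exact congrArg Prod.fst h1 }
  have hN : ∀ g, g ∈ N ↔ (Φ g (x0, 1)).1 = x0 := fun g => Iff.rfl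
  refine ⟨N, ?_, ⟨⟨fun g => (Φ g (x0, 1)).2, ?_⟩, ?_⟩, ?_⟩
  · have : Finite (ArtinGroup M ⧸ N) := by
      let F : ArtinGroup M ⧸ N → X := fun q => (Φ q.out (x0, 1)).1
      apply Finite.of_injective F
      intro p q hpq
      rw [← QuotientGroup.out_eq' p, ← QuotientGroup.out_eq' q, QuotientGroup.eq, hN, map_mul,
        Equiv.Perm.mul_apply, hc']
      have h1 : Φ p.out⁻¹ (Φ p.out (x0, 1)) = (x0, 1) := by
          rw [← Equiv.Perm.mul_apply, ← map_mul]; simp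
      rw [← Prod.mk.eta (p := Φ p.out (x0, 1)), hc'] at h1
      have h2 : (Φ p.out (x0, 1)).1 = (Φ q.out (x0, 1)).1 := hpq
      rw [h2] at h1
      exact congrArg Prod.fst h1
    exact Subgroup.finiteIndex_of_finite_quotient
  · simp
  · intro a b
    have hb := (hN b).1 b.2
    simp only [Subgroup.coe_mul, map_mul, Equiv.Perm.mul_apply]
    rw [← Prod.mk.eta (p := Φ b (x0, 1)), hb, hc']
  · intro i
    obtain ⟨w, hw⟩ := hgen i
    refine ⟨⟨PresentedGroup.mk _ w, ?_⟩, ?_⟩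
    · rw [hN, hΦ, hw]
    · change (Φ (PresentedGroup.mk _ w) (x0, 1)).2 = _
      rw [hΦ, hw]

theorem artin_fg {S : Type*} [Finite S] (M : S → S → ℕ) : Group.FG (ArtinGroup M) := by
  rw [Group.fg_iff]
  exact ⟨_, PresentedGroup.closure_range_of _, Set.finite_range _⟩

end partC


section partF

/-- twisted permutation -/
def twPerm {X : Type*} (π : Equiv.Perm X) (β : X → FB) : Equiv.Perm (X × FB) where
  toFun q := (π q.1, β q.1 * q.2)
  invFun q := (π.symm q.1, (β (π.symm q.1))⁻¹ * q.2)
  left_inv q := by simp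
  right_inv q := by simp

theorem twPerm_apply {X : Type*} (π : Equiv.Perm X) (β : X → FB) (x : X) (b : FB) :
    twPerm π β (x, b) = (π x, β x * b) := rfl

theorem twPerm_commute {X : Type*} (π : Equiv.Perm X) (β : X → FB) (c : FB) :
    Commute (rmul X c) (twPerm π β) := by
  apply Equiv.ext
  rintro ⟨x, b⟩
  simp [rmul_apply, twPerm_apply, mul_assoc]

theorem vlarge_two_even {S : Type*} (M : S → S → ℕ) (hM : IsCoxeterMatrix M) (s0 t0 : S)
    (hne : s0 ≠ t0) (hS : ∀ u, u = s0 ∨ u = t0) (k : ℕ) (hk : 2 ≤ k) (hm : M s0 t0 = 2 * k) :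
    VLarge (ArtinGroup M) := by
  classical
  have : NeZero k := ⟨by omega⟩
  have : Fact (1 < k) := ⟨by omega⟩
  let y : Equiv.Perm (ZMod k × FB) := twPerm (Equiv.addRight 1) (fun _ => 1)
  let β : ZMod k → FB := fun j => if j = 0 then FreeGroup.of false else if j = 1 then FreeGroup.of true else 1
  let σ : Equiv.Perm (ZMod k × FB) := twPerm 1 β
  let τ : S → Equiv.Perm (ZMod k × FB) := fun u => if u = s0 then σ else σ⁻¹ * y
  have hτs : τ s0 = σ := by simp [τ]
  have hτt : τ t0 = σ⁻¹ * y := by simp [τ, hne.symm]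
  have hy : ∀ n : ℕ, ∀ j b, (y ^ n) (j, b) = (j + n, b) := by
    intro n
    induction n with
    | zero => simp
    | succ n ih =>
      intro j b
      rw [pow_succ, Equiv.Perm.mul_apply]
      simp only [y, twPerm_apply, one_mul]
      change (y ^ n) _ = _
      rw [ih]
      simp; ring
  have hyk : y ^ k = 1 := by
    apply Equiv.ext
    rintro ⟨j, b⟩
    rw [hy]; simp
  have key : FreeGroup.lift τ (altWord s0 t0 (2 * k)) = FreeGroup.lift τ (altWord t0 s0 (2 * k)) := by
    rw [altWord_even, altWord_even]
    simp only [map_pow, map_mul, FreeGroup.lift_apply_of, hτs, hτt]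
    have h1 : (σ * (σ⁻¹ * y)) = y := by group
    have h2 : (σ⁻¹ * y * σ) = σ⁻¹ * y * (σ⁻¹)⁻¹ := by group
    rw [h1, h2, conj_pow, hyk]; group
  apply artin_VLarge M τ ?_ ?_ (0 : ZMod k) ?_
  · intro s t hst
    rcases hS s with rfl | rfl <;> rcases hS t with rfl | rfl
    · exact absurd rfl hst
    · rw [hm]; exact key
    · rw [hM.1, hm]; exact key.symm
    · exact absurd rfl hst
  · intro s c
    have h1 : Commute (rmul (ZMod k) c) σ := twPerm_commute _ _ _
    have h2 : Commute (rmul (ZMod k) c) y := twPerm_commute _ _ _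
    rcases hS s with rfl | rfl
    · rw [hτs]; exact h1
    · rw [hτt]; exact h1.inv_right.mul_right h2
  · intro i
    cases i
    · refine ⟨FreeGroup.of s0 ^ 2, ?_⟩
      simp only [map_pow, FreeGroup.lift_apply_of, hτs]
      rw [pow_two, Equiv.Perm.mul_apply]
      simp [σ, twPerm_apply, β, pow_two]
    · refine ⟨(FreeGroup.of s0 * FreeGroup.of t0)⁻¹ * FreeGroup.of s0 ^ 2 * (FreeGroup.of s0 * FreeGroup.of t0), ?_⟩
      simp only [map_pow, map_mul, map_inv, FreeGroup.lift_apply_of, hτs, hτt]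
      have h1 : (σ * (σ⁻¹ * y)) = y := by group
      rw [h1, Equiv.Perm.mul_apply, Equiv.Perm.mul_apply, Equiv.Perm.inv_eq_iff_eq]
      rw [pow_two, Equiv.Perm.mul_apply]
      simp [σ, y, twPerm_apply, β, pow_two]

theorem vlarge_two_odd {S : Type*} (M : S → S → ℕ) (hM : IsCoxeterMatrix M) (s0 t0 : S)
    (hne : s0 ≠ t0) (hS : ∀ u, u = s0 ∨ u = t0) (k : ℕ) (hk : 1 ≤ k) (hm : M s0 t0 = 2 * k + 1) :
    VLarge (ArtinGroup M) := by
  classical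
  set m := 2 * k + 1 with hmk
  have : NeZero m := ⟨by omega⟩
  have : Fact (1 < m) := ⟨by omega⟩
  have h21 : (2 : ZMod m) ≠ 1 := by
    intro h
    have : (1 : ZMod m) = 0 := by linear_combination h
    exact one_ne_zero this
  let f : ZMod m → FB := fun j => if j = 1 then (FreeGroup.of false)⁻¹ else
    if j = 2 then (FreeGroup.of true)⁻¹ else 1
  let y : Equiv.Perm ((Bool × ZMod m) × FB) := twPerm (Equiv.prodCongr (Equiv.refl _) (Equiv.addRight 1)) (fun _ => 1)
  let x : Equiv.Perm ((Bool × ZMod m) × FB) := twPerm (Equiv.prodCongr Equiv.boolNot (Equiv.refl _))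
    (fun q => if q.1 then (f q.2)⁻¹ else f q.2)
  have hxx : x * x = 1 := by
    apply Equiv.ext
    rintro ⟨⟨a, j⟩, b⟩
    cases a <;> simp [x, twPerm_apply]
  let τ : S → Equiv.Perm ((Bool × ZMod m) × FB) := fun u => if u = s0 then (y ^ k)⁻¹ * x else x * y ^ (k+1)
  have hτs : τ s0 = (y ^ k)⁻¹ * x := by simp [τ]
  have hτt : τ t0 = x * y ^ (k+1) := by simp [τ, hne.symm]
  have hy : ∀ n : ℕ, ∀ (j : ZMod m) (b : FB) (a : Bool), (y ^ n) ((a, j), b) = ((a, j + n), b) := by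
    intro n
    induction n with
    | zero => simp
    | succ n ih =>
      intro j b a
      rw [pow_succ, Equiv.Perm.mul_apply]
      have : y ((a, j), b) = ((a, j + 1), b) := by simp [y, twPerm_apply]
      rw [this, ih]
      simp; ring
  have hyk : y ^ m = 1 := by
    apply Equiv.ext
    rintro ⟨⟨a, j⟩, b⟩
    rw [hy]; simp
  have hst : τ s0 * τ t0 = y := by
    rw [hτs, hτt, mul_assoc, ← mul_assoc x, hxx, one_mul, pow_succ, ← mul_assoc]; group
  have key : FreeGroup.lift τ (altWord s0 t0 m) = FreeGroup.lift τ (altWord t0 s0 m) := by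
    rw [altWord_odd, altWord_odd]
    simp only [map_pow, map_mul, FreeGroup.lift_apply_of]
    have h1 : (τ t0 * τ s0) ^ k * τ t0 = τ t0 * (τ s0 * τ t0) ^ k := mul_pow_mul _ _ _
    rw [h1, hst, hτs, hτt, mul_assoc, ← pow_add, show k + 1 + k = m by omega, hyk]; group
  apply artin_VLarge M τ ?_ ?_ ((false, 0) : Bool × ZMod m) ?_
  · intro s t hst'
    rcases hS s with rfl | rfl <;> rcases hS t with rfl | rfl
    · exact absurd rfl hst'
    · rw [hm]; exact key
    · rw [hM.1, hm]; exact key.symm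
    · exact absurd rfl hst'
  · intro s c
    have h1 : Commute (rmul (Bool × ZMod m) c) x := twPerm_commute _ _ _
    have h2 : Commute (rmul (Bool × ZMod m) c) y := twPerm_commute _ _ _
    rcases hS s with rfl | rfl
    · rw [hτs]; exact (h2.pow_right _).inv_right.mul_right h1
    · rw [hτt]; exact h1.mul_right (h2.pow_right _)
  · let Y : FreeGroup S := FreeGroup.of s0 * FreeGroup.of t0
    let Z : FreeGroup S := Y ^ k * FreeGroup.of s0
    have hY : FreeGroup.lift τ Y = y := by simp [Y, hst]
    have hZ : FreeGroup.lift τ Z = x := by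
      simp only [Z, map_mul, map_pow, hY, FreeGroup.lift_apply_of, hτs]; group
    have hp : ∀ (n : ℕ) (b : FB), ((y ^ n)⁻¹ * x * y ^ n * x) ((false, 0), b) = ((false, 0), (f n)⁻¹ * (f 0 * b)) := by
      intro n b
      have e1 : x ((false, 0), b) = ((true, 0), f 0 * b) := by simp [x, twPerm_apply]
      have e2 : ∀ j b, x ((true, j), b) = ((false, j), (f j)⁻¹ * b) := by
        intro j b; simp [x, twPerm_apply]
      simp only [Equiv.Perm.mul_apply]
      rw [e1, hy, e2, Equiv.Perm.inv_eq_iff_eq, hy]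
      simp
    have f0 : f 0 = 1 := by
      have : (0 : ZMod m) ≠ 2 := by
        intro h
        have h2 : ((2 : ℕ) : ZMod m) = 0 := by simpa using h.symm
        rw [ZMod.natCast_eq_zero_iff] at h2
        have := Nat.le_of_dvd (by norm_num) h2
        omega
      simp [f, this]
    have hp2 : ∀ n : ℕ, FreeGroup.lift τ (((Y ^ n)⁻¹ * Z * Y ^ n * Z) ^ 2) ((false, 0), 1) = 
        ((false, 0), ((f n)⁻¹)^2) := by
      intro n
      rw [map_pow, map_mul, map_mul, map_mul, map_inv, map_pow, hY, hZ, pow_two, Equiv.Perm.mul_apply, hp, hp, f0]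
      simp [pow_two]
    intro i
    cases i
    · exact ⟨_, (hp2 1).trans (by simp [f])⟩
    · exact ⟨_, (hp2 2).trans (by simp [f, h21])⟩

end partF


section partD

/-- Alternating products of two elements of length n, ending in the first one. -/
def altP {Γ : Type*} [Group Γ] (a a' : Γ) : ℕ → Γ
  | 0 => 1
  | n + 1 => altP a' a n * a
termination_by n => n

theorem altP_zero {Γ : Type*} [Group Γ] (a a' : Γ) : altP a a' 0 = 1 := by rw [altP]
theorem altP_succ {Γ : Type*} [Group Γ] (a a' : Γ) (n : ℕ) :
    altP a a' (n+1) = altP a' a n * a := by rw [altP]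

theorem altP_even {Γ : Type*} [Group Γ] (a a' : Γ) (k : ℕ) : altP a a' (2 * k) = (a' * a) ^ k := by
  induction k with
  | zero => simp [altP_zero]
  | succ k ih => rw [show 2 * (k+1) = 2 * k + 1 + 1 by ring, altP_succ, altP_succ, ih, pow_succ, mul_assoc]

theorem altP_odd {Γ : Type*} [Group Γ] (a a' : Γ) (k : ℕ) :
    altP a a' (2 * k + 1) = (a * a') ^ k * a := by
  rw [altP_succ, altP_even]

theorem lift_altWord_of {S Γ : Type*} [Group Γ] (τ : S → Γ) (s t : S) (m : ℕ)
    (h : altP (τ s) (τ t) m = altP (τ t) (τ s) m) :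
    FreeGroup.lift τ (altWord s t m) = FreeGroup.lift τ (altWord t s m) := by
  rcases Nat.even_or_odd' m with ⟨k, rfl | rfl⟩
  · rw [altP_even, altP_even] at h
    rw [altWord_even, altWord_even]
    simpa using h.symm
  · rw [altP_odd, altP_odd] at h
    rw [altWord_odd, altWord_odd]
    simpa using h

variable {F : Type*} [Group F]

theorem altP_eq (a a' : F) (ha : a * a = 1) (ha' : a' * a' = 1) (m : ℕ) (h : (a * a') ^ m = 1) :
    altP a a' m = altP a' a m := by
  have key : ∀ (n : ℕ) (a a' : F), a * a = 1 → a' * a' = 1 →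
      (altP a a' n)⁻¹ * altP a' a n = (a * a') ^ n := by
    intro n
    induction n with
    | zero => intro a a' _ _; simp [altP_zero]
    | succ n ih =>
      intro a a' ha ha'
      have hi : a⁻¹ = a := inv_eq_of_mul_eq_one_left ha
      have h1 := ih a' a ha' ha
      rw [altP_succ, altP_succ, mul_inv_rev, hi]
      have : a * (altP a' a n)⁻¹ * (altP a a' n * a') = a * ((altP a' a n)⁻¹ * altP a a' n) * a' := by group
      rw [this, h1, ← mul_pow_mul, mul_assoc, pow_succ]
  have := key m a a' ha ha'
  rw [h] at this
  exact inv_mul_eq_one.1 this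

/-- the twisted left multiplication -/
def TT (β : F → FB) (a : F) : Equiv.Perm (F × FB) :=
  twPerm (Equiv.mulLeft a) (fun x => β (x⁻¹ * a * x))

theorem TT_apply (β : F → FB) (a x : F) (b : FB) :
    TT β a (x, b) = (a * x, β (x⁻¹ * a * x) * b) := rfl

theorem altP_TT (β : F → FB) (g : FB) (e : F → ℕ) (n : ℕ) :
    ∀ (a a' x : F) (b : FB), a * a = 1 → a' * a' = 1 →
      (∀ j < n, β (x⁻¹ * ((a * a') ^ j * a) * x) = g ^ e (x⁻¹ * ((a * a') ^ j * a) * x)) →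
      altP (TT β a) (TT β a') n (x, b) =
        (altP a a' n * x, g ^ (∑ j ∈ Finset.range n, e (x⁻¹ * ((a * a') ^ j * a) * x)) * b) := by
  induction n with
  | zero => intro a a' x b _ _ _; simp [altP_zero]
  | succ n ih =>
    intro a a' x b ha ha' h
    have hi : a⁻¹ = a := inv_eq_of_mul_eq_one_left ha
    have hconj : ∀ j : ℕ, (a * x)⁻¹ * ((a' * a) ^ j * a') * (a * x) = x⁻¹ * ((a * a') ^ (j+1) * a) * x := by
      intro j
      rw [mul_inv_rev, hi, pow_succ' (a * a') j]
      have : (a * a') ^ j * a = a * (a' * a) ^ j := mul_pow_mul _ _ _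
      have h2 : (a' * a) ^ j * a' = a' * (a * a') ^ j := mul_pow_mul _ _ _
      rw [h2]
      simp only [mul_assoc]
    rw [altP_succ, Equiv.Perm.mul_apply, TT_apply, ih a' a (a * x) _ ha' ha ?_, altP_succ,
      Finset.sum_range_succ']
    · have h0 := h 0 (Nat.succ_pos n)
      simp only [pow_zero, one_mul] at h0
      simp only [hconj, pow_zero, one_mul]
      rw [h0, pow_add]
      simp only [mul_assoc]
    · intro j hj
      rw [hconj]
      exact h (j+1) (by omega)

theorem altP_TT_eq (c₁ c₂ : F) (β : F → FB)
    (g₁ g₂ : FB) (h₁ : β c₁ = g₁) (h₂ : β c₂ = g₂) (hβ : ∀ y, y ≠ c₁ → y ≠ c₂ → β y = 1) (a a' : F)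
    (ha : a * a = 1) (ha' : a' * a' = 1) (m : ℕ) (h : (a * a') ^ m = 1)
    (hc : (c₁ * c₂) ^ m ≠ 1) :
    altP (TT β a) (TT β a') m = altP (TT β a') (TT β a) m := by
  classical
  have hi : a⁻¹ = a := inv_eq_of_mul_eq_one_left ha
  have hi' : a'⁻¹ = a' := inv_eq_of_mul_eq_one_left ha'
  have hrefl : ∀ j < m, (a' * a) ^ j * a' = (a * a') ^ (m - 1 - j) * a := by
    intro j hj
    have h1 : (a * a') ^ (m - 1 - j) * a * (a' * (a * a') ^ j) = 1 := by
      rw [← h]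
      have : (a * a') ^ (m - 1 - j) * a * (a' * (a * a') ^ j) = (a * a') ^ (m - 1 - j) * (a * a') * (a * a') ^ j := by group
      rw [this, ← pow_succ, ← pow_add]
      congr 1; omega
    rw [eq_inv_of_mul_eq_one_left h1, mul_inv_rev, ← inv_pow, mul_inv_rev, hi, hi']
  apply Equiv.ext
  rintro ⟨x, b⟩
  have hfin : ∀ (g : FB) (c : F),
      (∀ j : ℕ, β (x⁻¹ * ((a * a') ^ j * a) * x) = g ^ (if x⁻¹ * ((a * a') ^ j * a) * x = c then 1 else 0)) →
      altP (TT β a) (TT β a') m (x, b) = altP (TT β a') (TT β a) m (x, b) := by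
    intro g c hg
    rw [altP_TT β g (fun y => if y = c then 1 else 0) m a a' x b ha ha' (fun j _ => hg j),
      altP_TT β g (fun y => if y = c then 1 else 0) m a' a x b ha' ha, altP_eq a a' ha ha' m h]
    · congr 3
      rw [← Finset.sum_range_reflect]
      apply Finset.sum_congr rfl
      intro j hj
      rw [Finset.mem_range] at hj
      rw [hrefl j hj]
    · intro j hj
      rw [hrefl j hj]
      exact hg _
  by_cases hex : ∃ i : ℕ, x⁻¹ * ((a * a') ^ i * a) * x = c₁
  · obtain ⟨i, hi1⟩ := hex
    apply hfin g₁ c₁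
    intro j
    split_ifs with hj
    · rw [hj, h₁, pow_one]
    · rw [pow_zero]
      apply hβ _ hj
      intro hj2
      apply hc
      have e1 : c₁ * c₂ = x⁻¹ * ((a * a') ^ i * (a' * a) ^ j) * (x⁻¹)⁻¹ := by
        rw [← hi1, ← hj2]
        have : (a * a') ^ j * a = a * (a' * a) ^ j := mul_pow_mul _ _ _
        rw [this]
        have e : x⁻¹ * ((a * a') ^ i * a) * x * (x⁻¹ * (a * (a' * a) ^ j) * x) = 
          x⁻¹ * ((a * a') ^ i * (a * a) * (a' * a) ^ j) * x := by group
        rw [e, ha]; group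
      have e2 : a' * a = (a * a')⁻¹ := by rw [mul_inv_rev, hi, hi']
      rw [e1, conj_pow, e2]
      have hcm : Commute ((a * a') ^ i) ((a * a')⁻¹ ^ j) :=
        ((Commute.refl (a * a')).inv_right.pow_left i).pow_right j
      rw [hcm.mul_pow, ← pow_mul, mul_comm i, pow_mul, h, ← pow_mul, mul_comm j, pow_mul, inv_pow, h]
      simp
  · push Not at hex
    apply hfin g₂ c₂
    intro j
    split_ifs with hj
    · rw [hj, h₂, pow_one]
    · rw [pow_zero]
      exact hβ _ (hex j) hj

theorem vlarge_of_finite_quot {S : Type*} [Finite F] (M : S → S → ℕ) (π : S → F)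
    (hsq : ∀ s, π s * π s = 1) (hrel : ∀ s t, s ≠ t → (π s * π t) ^ (M s t) = 1)
    (s0 t0 u0 : S) (hst : s0 ≠ t0) (hut : u0 ≠ t0)
    (D : ℕ) (hD : ∀ s t, s ≠ t → M s t ∣ D)
    (hne : (π s0 * (π t0 * π u0 * π t0)) ^ D ≠ 1) : VLarge (ArtinGroup M) := by
  classical
  have hpow : ∀ s t, s ≠ t → (π s * π t) ^ D = 1 := by
    intro s t h
    obtain ⟨q, hq⟩ := hD s t h
    rw [hq, pow_mul, hrel s t h, one_pow]
  have hinv : ∀ s, (π s)⁻¹ = π s := fun s => inv_eq_of_mul_eq_one_left (hsq s)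
  set c₁ := π s0 with hc₁
  set c₂ := π t0 * π u0 * π t0 with hc₂
  have hc12 : c₂ ≠ c₁ := by
    intro h
    apply hne
    rw [h, hsq, one_pow]
  let β : F → FB := fun y => if y = c₁ then FreeGroup.of false else if y = c₂ then FreeGroup.of true else 1
  have hβ1 : β c₁ = FreeGroup.of false := by simp [β]
  have hβ2 : β c₂ = FreeGroup.of true := by simp [β, hc12]
  have hβ : ∀ y, y ≠ c₁ → y ≠ c₂ → β y = 1 := by
    intro y h1 h2; simp [β, h1, h2]
  have hβt : β (π t0) = 1 := by
    apply hβ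
    · intro h
      apply hne
      rw [← h, hc₂, ← mul_assoc, ← mul_assoc, hsq, one_mul]
      exact hpow _ _ hut
    · intro h
      apply hne
      rw [← h]
      exact hpow _ _ hst
  apply artin_VLarge M (fun s => TT β (π s)) ?_ ?_ (1 : F) ?_
  · intro s t h
    apply lift_altWord_of
    apply altP_TT_eq c₁ c₂ β _ _ hβ1 hβ2 hβ _ _ (hsq s) (hsq t) _ (hrel s t h)
    intro h2
    apply hne
    obtain ⟨q, hq⟩ := hD s t h
    rw [hq, pow_mul, h2, one_pow]
  · intro s c
    exact twPerm_commute _ _ _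
  · intro i
    cases i
    · refine ⟨FreeGroup.of s0 ^ 2, ?_⟩
      simp only [map_pow, FreeGroup.lift_apply_of]
      rw [pow_two, Equiv.Perm.mul_apply, TT_apply, TT_apply]
      simp only [mul_one, inv_one, one_mul, ← hc₁]
      rw [inv_mul_cancel, one_mul, hβ1, hc₁, hsq, pow_two]
    · refine ⟨(FreeGroup.of t0)⁻¹ * FreeGroup.of u0 ^ 2 * FreeGroup.of t0, ?_⟩
      simp only [map_pow, map_mul, map_inv, FreeGroup.lift_apply_of]
      rw [Equiv.Perm.mul_apply, Equiv.Perm.mul_apply, Equiv.Perm.inv_eq_iff_eq, pow_two,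
        Equiv.Perm.mul_apply, TT_apply, TT_apply, TT_apply, TT_apply]
      simp only [mul_one, inv_one, one_mul, hβt]
      have e1 : (π t0)⁻¹ * π u0 * π t0 = c₂ := by rw [hinv]
      have e2 : (π u0 * π t0)⁻¹ * π u0 * (π u0 * π t0) = c₂ := by rw [← e1]; group
      rw [e1, e2, hβ2, ← pow_two, ← mul_assoc, hsq, one_mul]

end partD


section PartE

open Polynomial.Chebyshev

/-- The coefficient condition forcing a product of two reflections to have order dividing `m`. -/
def ChebVanish {A : Type*} [CommRing A] (m : ℕ) (t : A) : Prop :=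
  ∃ k : ℕ, (m = 2 * k ∧ (S A ((k : ℤ) - 1)).eval t = 0) ∨
    (m = 2 * k + 1 ∧ (S A (k : ℤ)).eval t + (S A ((k : ℤ) - 1)).eval t = 0)

theorem eval_S_map {A B : Type*} [CommRing A] [CommRing B] (φ : A →+* B) (n : ℤ) (t : A) :
    (S B n).eval (φ t) = φ ((S A n).eval t) := by
  rw [← map_S φ, Polynomial.eval_map, Polynomial.eval₂_at_apply]

theorem ChebVanish.map {A B : Type*} [CommRing A] [CommRing B] (φ : A →+* B) {m : ℕ} {t : A}
    (h : ChebVanish m t) : ChebVanish m (φ t) := by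
  obtain ⟨k, h | h⟩ := h
  · exact ⟨k, Or.inl ⟨h.1, by rw [eval_S_map, h.2, map_zero]⟩⟩
  · exact ⟨k, Or.inr ⟨h.1, by rw [eval_S_map, eval_S_map, ← map_add, h.2, map_zero]⟩⟩

theorem ChebVanish.of_map {A B : Type*} [CommRing A] [CommRing B] (φ : A →+* B)
    (hφ : Function.Injective φ) {m : ℕ} {t : A}
    (h : ChebVanish m (φ t)) : ChebVanish m t := by
  obtain ⟨k, h | h⟩ := h
  · refine ⟨k, Or.inl ⟨h.1, hφ ?_⟩⟩
    rw [← eval_S_map, h.2, map_zero]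
  · refine ⟨k, Or.inr ⟨h.1, hφ ?_⟩⟩
    rw [map_add, ← eval_S_map, ← eval_S_map, h.2, map_zero]

theorem reflection_pow_eq_one {A V : Type*} [CommRing A] [AddCommGroup V] [Module A V]
    {x y : V} {f g : Module.Dual A V} (hf : f x = 2) (hg : g y = 2) (m : ℕ)
    (h : ChebVanish m (f y * g x - 2)) :
    (Module.reflection hf * Module.reflection hg) ^ m = 1 := by
  ext z
  rw [Module.reflection_mul_reflection_pow_apply hf hg m z]
  obtain ⟨k, ⟨rfl, h⟩ | ⟨rfl, h⟩⟩ := h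
  · have e1 : ((((2 * k : ℕ) : ℤ)) - 2) / 2 = (k : ℤ) - 1 := by omega
    have e2 : ((((2 * k : ℕ) : ℤ)) - 1) / 2 = (k : ℤ) - 1 := by omega
    rw [e1, e2, h]
    simp
  · have e1 : ((((2 * k + 1 : ℕ) : ℤ)) - 1) / 2 = (k : ℤ) := by omega
    have e2 : ((((2 * k + 1 : ℕ) : ℤ)) - 3) / 2 = (k : ℤ) - 1 := by omega
    have e3 : ((((2 * k + 1 : ℕ) : ℤ))) / 2 = (k : ℤ) := by omega
    have e4 : ((((2 * k + 1 : ℕ) : ℤ)) - 2) / 2 = (k : ℤ) - 1 := by omega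
    rw [e1, e2, e3, e4, h]
    simp

theorem vlarge_of_ring {A : Type*} [CommRing A] [Finite A] {T : Type*} [Fintype T] [DecidableEq T]
    (M : T → T → ℕ) (κ : T → T → A) (hd : ∀ s, κ s s = 2)
    (hcox : ∀ s t, s ≠ t → ChebVanish (M s t) (κ s t * κ t s - 2))
    (s t u : T) (hst : s ≠ t) (hut : u ≠ t) (hsu : s ≠ u) (D : ℕ)
    (hD : ∀ s t, s ≠ t → M s t ∣ D)
    (hne : (S A ((D : ℤ) - 1)).eval
        ((κ s u - κ t u * κ s t) * (κ u s - κ t s * κ u t) - 2) *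
        (κ u s - κ t s * κ u t) ≠ 0) : VLarge (ArtinGroup M) := by
  classical
  let f : T → Module.Dual A (T → A) := fun s => ∑ t, κ s t • LinearMap.proj t
  have hfs : ∀ s t, f s (Pi.single t 1) = κ s t := by
    intro s t
    simp [f, LinearMap.sum_apply, Pi.single_apply]
  have hf : ∀ s, f s (Pi.single s 1) = 2 := fun s => by rw [hfs, hd]
  let π : T → ((T → A) ≃ₗ[A] (T → A)) := fun s => Module.reflection (hf s)
  haveI : Finite ((T → A) ≃ₗ[A] (T → A)) := DFunLike.finite _
  have hπ : ∀ s z, π s z = z - f s z • Pi.single s 1 := fun s z => Module.reflection_apply z (hf s)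
  have hsq : ∀ s, π s * π s = 1 := fun s => by
    ext1 z
    exact Module.involutive_reflection (hf s) z
  have hsq' : ∀ s z, π s (π s z) = z := fun s z => by
    have := congrArg (fun e => e z) (hsq s)
    simpa using this
  refine vlarge_of_finite_quot M π hsq ?_ s t u hst hut D hD ?_
  · intro s t h
    refine reflection_pow_eq_one (hf s) (hf t) (M s t) ?_
    rw [hfs, hfs]
    exact hcox s t h
  · set y : T → A := π t (Pi.single u 1) with hy
    let g : Module.Dual A (T → A) := (f u).comp (π t).toLinearMap
    have hgz : ∀ z, g z = f u (π t z) := fun z => rfl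
    have hg : g y = 2 := by rw [hgz, hy, hsq', hf]
    have hc : π t * π u * π t = Module.reflection hg := by
      ext1 z
      rw [Module.reflection_apply, LinearEquiv.mul_apply, LinearEquiv.mul_apply, hπ u, map_sub,
        map_smul, hsq', hgz, hy]
    have hyv : y = Pi.single u 1 - κ t u • Pi.single t 1 := by rw [hy, hπ, hfs]
    have hfy : f s y = κ s u - κ t u * κ s t := by
      rw [hyv, map_sub, map_smul, hfs, hfs, smul_eq_mul]
    have hgx : g (Pi.single s 1) = κ u s - κ t s * κ u t := by
      rw [hgz, hπ, hfs, map_sub, map_smul, hfs, hfs, smul_eq_mul]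
    intro h1
    rw [hc] at h1
    have h2 := Module.reflection_mul_reflection_pow_apply_self (hf s) hg D
    rw [show Module.reflection (hf s) = π s from rfl, h1] at h2
    have h3 := congrFun h2 u
    rw [hfy, hgx, hyv] at h3
    simp [Pi.single_apply, hsu.symm, hut] at h3
    apply hne
    linear_combination h3

theorem chebVanish_cos (m : ℕ) (hm : 3 ≤ m) :
    ChebVanish m ((-(2 * Real.cos (Real.pi / m))) * (-(2 * Real.cos (Real.pi / m))) - 2) := by
  have hm0 : (0 : ℝ) < m := by positivity
  have hm3 : (3 : ℝ) ≤ m := by exact_mod_cast hm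
  have e : (-(2 * Real.cos (Real.pi / m))) * (-(2 * Real.cos (Real.pi / m))) - 2
      = 2 * Real.cos (2 * (Real.pi / m)) := by
    rw [Real.cos_two_mul]; ring
  rw [e]
  set θ : ℝ := 2 * (Real.pi / m) with hθ
  have hmθ : m * θ = 2 * Real.pi := by rw [hθ]; field_simp
  have hs : Real.sin θ ≠ 0 := by
    apply ne_of_gt
    apply Real.sin_pos_of_pos_of_lt_pi
    · have := Real.pi_pos; positivity
    · nlinarith [Real.pi_pos]
  obtain ⟨k, rfl | rfl⟩ := Nat.even_or_odd' m
  · refine ⟨k, Or.inl ⟨rfl, ?_⟩⟩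
    have h := S_two_mul_real_cos θ ((k : ℤ) - 1)
    have hk : (((((k : ℤ) - 1 : ℤ)) : ℝ) + 1) * θ = Real.pi := by
      push_cast at hmθ ⊢; linarith
    rw [hk, Real.sin_pi] at h
    exact (mul_eq_zero.mp h).resolve_right hs
  · refine ⟨k, Or.inr ⟨rfl, ?_⟩⟩
    have h := S_two_mul_real_cos θ ((k : ℤ) - 1)
    have h' := S_two_mul_real_cos θ (k : ℤ)
    have hk : (((((k : ℤ)) : ℝ)) + 1) * θ = 2 * Real.pi - (((((k : ℤ) - 1 : ℤ)) : ℝ) + 1) * θ := by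
      push_cast at hmθ ⊢; linarith
    rw [hk, Real.sin_two_pi_sub] at h'
    refine (mul_eq_zero.mp (?_ : _ * Real.sin θ = 0)).resolve_right hs
    rw [add_mul, h, h']; ring

theorem S_ge_one (t : ℝ) (ht : 2 ≤ t) (n : ℕ) :
    1 ≤ (S ℝ (n : ℤ)).eval t ∧ (S ℝ (n : ℤ)).eval t ≤ (S ℝ ((n : ℤ) + 1)).eval t := by
  induction n with
  | zero => simp; linarith
  | succ n ih =>
    push_cast
    refine ⟨ih.1.trans ih.2, ?_⟩
    have h : (S ℝ ((n : ℤ) + 1 + 1)).eval t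
        = t * (S ℝ ((n : ℤ) + 1)).eval t - (S ℝ (n : ℤ)).eval t := by
      rw [show (n : ℤ) + 1 + 1 = n + 2 by ring, S_add_two]; simp
    rw [h]
    nlinarith [ih.1, ih.2]

theorem two_cos_ge_one (m : ℕ) (hm : 3 ≤ m) : 1 ≤ 2 * Real.cos (Real.pi / m) := by
  have hm3 : (3 : ℝ) ≤ m := by exact_mod_cast hm
  have h : Real.cos (Real.pi / 3) ≤ Real.cos (Real.pi / m) := by
    apply Real.cos_le_cos_of_nonneg_of_le_pi
    · have := Real.pi_pos; positivity
    · have := Real.pi_pos; linarith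
    · have := Real.pi_pos; gcongr
  rw [Real.cos_pi_div_three] at h
  linarith

theorem vlarge_three {T : Type*} [Fintype T] (M : T → T → ℕ) (hM : IsCoxeterMatrix M)
    (hlarge : ∀ s t : T, s ≠ t → 3 ≤ M s t)
    (s t u : T) (hst : s ≠ t) (hut : u ≠ t) (hsu : s ≠ u) : VLarge (ArtinGroup M) := by
  classical
  let c : T → T → ℝ := fun s t => 2 * Real.cos (Real.pi / M s t)
  let G : Set ℝ := Set.range (fun p : T × T => c p.1 p.2)
  have hG : G.Finite := Set.finite_range _
  have hGi : ∀ x ∈ G, IsIntegral ℤ x := by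
    rintro _ ⟨p, rfl⟩
    have h := Real.isIntegral_two_mul_cos_rat_mul_pi (1 / (M p.1 p.2 : ℚ))
    have e : ((1 / (M p.1 p.2 : ℚ) : ℚ) : ℝ) * Real.pi = Real.pi / M p.1 p.2 := by
      push_cast; ring
    rw [e] at h
    exact h
  let R := Algebra.adjoin ℤ G
  haveI hfin : Module.Finite ℤ R := Algebra.finite_adjoin_of_finite_of_isIntegral hG hGi
  let φ : R →+* ℝ := R.val.toRingHom
  have hφ : Function.Injective φ := Subtype.val_injective
  let c' : T → T → R := fun s t => ⟨c s t, Algebra.subset_adjoin ⟨(s, t), rfl⟩⟩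
  let κ : T → T → R := fun s t => if s = t then 2 else - c' s t
  have hκd : ∀ s, κ s s = 2 := fun s => by simp [κ]
  have hκ : ∀ s t, s ≠ t → φ (κ s t) = -(2 * Real.cos (Real.pi / M s t)) := by
    intro s t h
    simp only [κ, if_neg h]
    rfl
  have hκl : ∀ s t, s ≠ t → φ (κ s t) ≤ -1 := by
    intro s t h
    rw [hκ s t h]
    linarith [two_cos_ge_one _ (hlarge s t h)]
  have hcox : ∀ s t, s ≠ t → ChebVanish (M s t) (κ s t * κ t s - 2) := by
    intro s t h
    apply ChebVanish.of_map φ hφ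
    rw [map_sub, map_mul, map_ofNat, hκ s t h, hκ t s h.symm, hM.1 t s]
    have := chebVanish_cos (M s t) (hlarge s t h)
    exact this
  let D : ℕ := ∏ p : T × T, M p.1 p.2
  have hD : ∀ s t, s ≠ t → M s t ∣ D := fun s t _ =>
    Finset.dvd_prod_of_mem (fun p : T × T => M p.1 p.2) (Finset.mem_univ (s, t))
  have hDpos : 0 < D := by
    apply Finset.prod_pos
    rintro ⟨a, b⟩ _
    by_cases h : a = b
    · subst h; simp [hM.2.1]
    · have := hlarge a b h
      simp; omega
  set a : R := (S R ((D : ℤ) - 1)).eval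
        ((κ s u - κ t u * κ s t) * (κ u s - κ t s * κ u t) - 2) *
        (κ u s - κ t s * κ u t) with ha
  have ha0 : a ≠ 0 := by
    intro h
    have h1 : φ a = 0 := by rw [h, map_zero]
    rw [ha, map_mul, ← eval_S_map] at h1
    have x1 := hκl s u hsu
    have x2 := hκl t u hut.symm
    have x3 := hκl s t hst
    have x4 := hκl u s hsu.symm
    have x5 := hκl t s hst.symm
    have x6 := hκl u t hut
    have y1 : φ (κ s u - κ t u * κ s t) ≤ -2 := by
      rw [map_sub, map_mul]; nlinarith
    have y2 : φ (κ u s - κ t s * κ u t) ≤ -2 := by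
      rw [map_sub, map_mul]; nlinarith
    have z : 2 ≤ φ ((κ s u - κ t u * κ s t) * (κ u s - κ t s * κ u t) - 2) := by
      rw [map_sub, map_mul, map_ofNat]; nlinarith
    have w := (S_ge_one _ z (D - 1)).1
    rw [show ((D - 1 : ℕ) : ℤ) = (D : ℤ) - 1 by omega] at w
    rcases mul_eq_zero.mp h1 with h2 | h2 <;> linarith
  have h2 : ∀ b : R, 2 * b ≠ 1 := by
    intro b hb
    have hbi : IsIntegral ℤ (φ b) := (Algebra.IsIntegral.isIntegral (R := ℤ) b).map R.val
    have hb' : 2 * φ b = 1 := by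
      rw [← map_one φ, ← hb, map_mul, map_ofNat]
    have hb2 : φ b = ((1 / 2 : ℚ) : ℝ) := by push_cast; linarith
    obtain ⟨k, hk⟩ := hbi.exists_int_iff_exists_rat.mp ⟨_, hb2⟩
    rw [hk] at hb'
    have : 2 * k = 1 := by exact_mod_cast hb'
    omega
  let I : Ideal R := Ideal.span {2 * a}
  have hI : I ≠ ⊥ := by
    intro h
    rw [Ideal.span_singleton_eq_bot] at h
    rcases mul_eq_zero.mp h with h3 | h3
    · exact two_ne_zero h3
    · exact ha0 h3
  have haI : a ∉ I := by
    intro h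
    obtain ⟨b, hb⟩ := Ideal.mem_span_singleton'.mp h
    apply h2 b
    apply mul_right_cancel₀ ha0
    linear_combination hb
  haveI : Finite (R ⧸ I) := Ring.HasFiniteQuotients.finiteQuotient hI
  let ψ : R →+* R ⧸ I := Ideal.Quotient.mk I
  refine vlarge_of_ring (A := R ⧸ I) M (fun s t => ψ (κ s t)) ?_ ?_ s t u hst hut hsu D hD ?_
  · intro s
    simp only [hκd, map_ofNat]
  · intro s t h
    have := (hcox s t h).map ψ
    rwa [map_sub, map_mul, map_ofNat] at this
  · intro h
    apply haI
    rw [← Ideal.Quotient.eq_zero_iff_mem]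
    rw [← h, ha]
    change ψ _ = _
    rw [map_mul, ← eval_S_map, map_sub, map_mul, map_sub, map_sub, map_mul, map_mul, map_ofNat]

end PartE


/-- A large-type, free-of-infinity, hyperbolic-type Artin group (on at least 2 generators)
has property `R_∞`. -/
theorem largeType_freeOfInfinity_hyperbolicType_propertyRInfinity
    {S : Type*} [Fintype S] (hcard : 2 ≤ Fintype.card S)
    (M : S → S → ℕ) (hM : IsCoxeterMatrix M)
    (hlarge : ∀ s t : S, s ≠ t → 3 ≤ M s t ∧ M s t ≠ 0)
    (hhyp : ¬ ∃ s t u : S, s ≠ t ∧ t ≠ u ∧ s ≠ u ∧ M s t = 3 ∧ M t u = 3 ∧ M s u = 3) :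
    PropertyRInfinity (ArtinGroup M) := by
  classical
  haveI := artin_fg M
  apply propertyRInfinity_of_VLarge
  by_cases h3 : 3 ≤ Fintype.card S
  · obtain ⟨s, t, u, hst, hsu, htu⟩ := Fintype.two_lt_card_iff.mp h3
    exact vlarge_three M hM (fun a b h => (hlarge a b h).1) s t u hst htu.symm hsu
  · have h2 : Fintype.card S = 2 := by omega
    rw [← Nat.card_eq_fintype_card, Nat.card_eq_two_iff] at h2
    obtain ⟨s, t, hst, hu⟩ := h2
    have hS : ∀ u, u = s ∨ u = t := fun u => by
      have : u ∈ ({s, t} : Set S) := by rw [hu]; trivial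
      simpa using this
    have hl := (hlarge s t hst).1
    obtain ⟨k, hk | hk⟩ := Nat.even_or_odd' (M s t)
    · exact vlarge_two_even M hM s t hst hS k (by omega) hk
    · exact vlarge_two_odd M hM s t hst hS k (by omega) hk
end

section
/- Let M be a Coxeter matrix on a finite set S with at least 3 elements such that for all s ≠ t either M s t = 0 or M s t ≥ 6 (XXXL type), and suppose the presentation graph Γ of M is twistless. Then the Artin group A[M] has property R_∞. -/
/-- The presentation graph of a Coxeter matrix `M`: vertices are the elements of `S`,
and `s ≠ t` are adjacent if and only if `M s t ≠ 0`. -/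
def presGraph {S : Type*} (M : S → S → ℕ) : SimpleGraph S :=
  SimpleGraph.fromRel (fun s t => M s t ≠ 0)

/-- A graph is twistless if it is connected, has no cut-vertex (removing any single
vertex leaves a connected graph) and no separating edge (removing the two endpoints of
any edge, together with all incident edges, leaves a connected graph). -/
def Twistless {V : Type*} (G : SimpleGraph V) : Prop :=
  G.Connected ∧
  (∀ v : V, (G.induce {u : V | u ≠ v}).Connected) ∧
  (∀ s t : V, G.Adj s t → (G.induce {u : V | u ≠ s ∧ u ≠ t}).Connected)

namespace RInf

/-- Twisted conjugacy is an equivalence relation. -/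
theorem twistedConj_equivalence {G : Type*} [Group G] (φ : G ≃* G) :
    Equivalence (TwistedConj φ) where
  refl g := ⟨1, by simp⟩
  symm := by
    rintro g h ⟨x, rfl⟩
    exact ⟨x⁻¹, by simp [mul_assoc]⟩
  trans := by
    rintro g h k ⟨x, rfl⟩ ⟨y, rfl⟩
    exact ⟨y * x, by simp [mul_assoc]⟩

/-- A finite simple nonabelian group with a nontrivial cyclic Sylow subgroup has no
automorphism with a single twisted conjugacy class. -/
theorem exists_not_twistedConj_one {P : Type*} [Group P] [Finite P] [IsSimpleGroup P]
    (hna : ∃ a b : P, a * b ≠ b * a) (q : ℕ) [Fact q.Prime] (hq : q ∣ Nat.card P)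
    (hcyc : ∀ T : Sylow q P, IsCyclic T) (α : P ≃* P) :
    ∃ g : P, ¬ TwistedConj α 1 g := by
  by_contra hcon
  push Not at hcon
  have hsurj : Function.Surjective (fun x : P => x * (α x)⁻¹) := by
    intro g
    obtain ⟨x, hx⟩ := hcon g
    exact ⟨x, by simpa using hx.symm⟩
  have hinj : Function.Injective (fun x : P => x * (α x)⁻¹) :=
    Finite.injective_iff_surjective.mpr hsurj
  have hfix : ∀ x, α x = x → x = 1 := by
    intro x hx
    apply hinj
    simp [hx]
  have hinj' : Function.Injective (fun x : P => (α x)⁻¹ * x) := by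
    intro x y hxy
    simp only at hxy
    have h2 : x * y⁻¹ = α (x * y⁻¹) := by
      have := congrArg (fun z => α x * z * y⁻¹) hxy
      simpa [mul_assoc] using this
    have := hfix _ h2.symm
    exact mul_inv_eq_one.mp this
  have hsurj' : Function.Surjective (fun x : P => (α x)⁻¹ * x) :=
    Finite.injective_iff_surjective.mp hinj'
  -- an invariant Sylow subgroup
  obtain ⟨T, hT⟩ : ∃ T : Sylow q P, ∀ h ∈ T, α h ∈ T := by
    let T₀ : Sylow q P := default
    let T₁ : Sylow q P := T₀.mapSurjective (f := α.toMonoidHom) α.surjective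
    obtain ⟨g, hg⟩ := MulAction.exists_smul_eq P T₀ T₁
    obtain ⟨x, hx⟩ := hsurj' g
    refine ⟨x • T₀, ?_⟩
    intro h hh
    have hh' : ∃ k ∈ T₀, x * k * x⁻¹ = h := by
      obtain ⟨k, hk, rfl⟩ := hh
      exact ⟨k, hk, by simp⟩
    obtain ⟨k, hk, rfl⟩ := hh'
    have hk1 : α k ∈ T₁ := ⟨k, hk, rfl⟩
    rw [← hg] at hk1
    obtain ⟨l, hl, hl2⟩ := hk1
    have hl3 : g * l * g⁻¹ = α k := by simpa using hl2
    refine ⟨l, hl, ?_⟩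
    have : x * l * x⁻¹ = α x * α k * (α x)⁻¹ := by
      rw [← hl3, ← hx]; simp [mul_assoc]
    simpa using this
  have hTc := hcyc T
  obtain ⟨⟨z, hzT⟩, hz⟩ := hTc.exists_generator
  have hgen : ∀ h ∈ T, ∃ i : ℤ, h = z ^ i := by
    intro h hh
    obtain ⟨i, hi⟩ := Subgroup.mem_zpowers_iff.mp (hz ⟨h, hh⟩)
    exact ⟨i, by simpa using (congrArg Subtype.val hi).symm⟩
  -- `α` is onto on `T`
  have hTsurj : ∀ h ∈ T, ∃ k ∈ T, α k = h := by
    have : Function.Surjective (fun k : T => (⟨α k, hT k k.2⟩ : T)) :=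
      Finite.surjective_of_injective (by
        intro a b hab
        have := congrArg Subtype.val hab
        exact Subtype.ext (α.injective this))
    intro h hh
    obtain ⟨k, hk⟩ := this ⟨h, hh⟩
    exact ⟨k, k.2, congrArg Subtype.val hk⟩
  let C := Subgroup.centralizer (T : Set P)
  have hCα : ∀ c ∈ C, α c ∈ C := by
    intro c hc
    rw [Subgroup.mem_centralizer_iff] at hc ⊢
    intro h hh
    obtain ⟨k, hk, rfl⟩ := hTsurj h hh
    rw [← map_mul, ← map_mul, hc k hk]
  have hCsurj : Function.Surjective
      (fun c : C => (⟨(α c)⁻¹ * c, C.mul_mem (C.inv_mem (hCα c c.2)) c.2⟩ : C)) :=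
    Finite.surjective_of_injective (by
      intro a b hab
      exact Subtype.ext (hinj' (congrArg Subtype.val hab)))
  have hNC : Subgroup.normalizer (T : Set P) ≤ Subgroup.centralizer (T : Set P) := by
    intro n hn
    have hn' : ∀ h, h ∈ T ↔ n * h * n⁻¹ ∈ T := fun h =>
      Subgroup.mem_normalizer_iff.mp hn h
    obtain ⟨e, he⟩ := hgen _ ((hn' z).mp hzT)
    have hact : ∀ h ∈ T, n * h * n⁻¹ = h ^ e := by
      intro h hh
      obtain ⟨i, rfl⟩ := hgen h hh
      rw [← conj_zpow, he, ← zpow_mul, ← zpow_mul, mul_comm]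
    have hmem : (α n)⁻¹ * n ∈ C := by
      rw [Subgroup.mem_centralizer_iff]
      intro h hh
      obtain ⟨k, hk, hk2⟩ := hTsurj h hh
      have h1 : α n * h * (α n)⁻¹ = h ^ e := by
        rw [← hk2, ← map_zpow, ← hact k hk]; simp
      have h2 := hact h hh
      have h3 : α n * h * (α n)⁻¹ = n * h * n⁻¹ := h1.trans h2.symm
      have := congrArg (fun w => (α n)⁻¹ * w * n) h3
      simpa [mul_assoc] using this
    obtain ⟨c, hc⟩ := hCsurj ⟨_, hmem⟩
    have := hinj' (congrArg Subtype.val hc)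
    rw [← this]
    exact c.2
  have hcomp := MonoidHom.ker_transferSylow_isComplement' T hNC
  obtain h | h := (inferInstance : (MonoidHom.transferSylow T hNC).ker.Normal).eq_bot_or_eq_top
  · rw [h] at hcomp
    have htop : (T : Subgroup P) = ⊤ := by
      simpa using hcomp
    obtain ⟨a, b, hab⟩ := hna
    obtain ⟨i, hi⟩ := hgen a (by change a ∈ (T : Subgroup P); rw [htop]; trivial)
    obtain ⟨j, hj⟩ := hgen b (by change b ∈ (T : Subgroup P); rw [htop]; trivial)
    exact hab (by rw [hi, hj, ← zpow_add, ← zpow_add, add_comm])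
  · rw [h] at hcomp
    have hbot : (T : Subgroup P) = ⊥ := by
      simpa using hcomp
    exact T.ne_bot_of_dvd_card hq hbot

/-- Two normal subgroups whose intersection is in the kernel of a map onto a nonabelian simple
group. -/
theorem le_ker_of_inf_le {H P : Type*} [Group H] [Group P] [IsSimpleGroup P]
    (hna : ∃ a b : P, a * b ≠ b * a) (f : H →* P) (hf : Function.Surjective f)
    (A B : Subgroup H) [A.Normal] [B.Normal] (hAB : A ⊓ B ≤ f.ker) :
    A ≤ f.ker ∨ B ≤ f.ker := by
  have hA : (A.map f).Normal := Subgroup.Normal.map inferInstance f hf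
  have hB : (B.map f).Normal := Subgroup.Normal.map inferInstance f hf
  rcases hA.eq_bot_or_eq_top with h | h
  · left; exact (Subgroup.map_eq_bot_iff _).mp h
  rcases hB.eq_bot_or_eq_top with h' | h'
  · right; exact (Subgroup.map_eq_bot_iff _).mp h'
  exfalso
  obtain ⟨a, b, hab⟩ := hna
  obtain ⟨x, hx, rfl⟩ : a ∈ A.map f := by rw [h]; trivial
  obtain ⟨y, hy, rfl⟩ : b ∈ B.map f := by rw [h']; trivial
  apply hab
  have h1 : x * y * x⁻¹ * y⁻¹ ∈ A ⊓ B := by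
    constructor
    · have := Subgroup.Normal.conj_mem (inferInstance : A.Normal) x⁻¹ (A.inv_mem hx) y
      have := A.mul_mem hx this
      simpa [mul_assoc] using this
    · have := Subgroup.Normal.conj_mem (inferInstance : B.Normal) y hy x
      exact B.mul_mem this (B.inv_mem hy)
  have h2 := hAB h1
  rw [MonoidHom.mem_ker] at h2
  simp only [map_mul, map_inv] at h2
  rw [mul_inv_eq_one, mul_inv_eq_iff_eq_mul] at h2
  exact h2

/-- Chinese remainder theorem for maps onto nonabelian simple groups. -/
theorem crt {H J : Type*} [Group H] {P : J → Type*} [∀ a, Group (P a)]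
    [∀ a, IsSimpleGroup (P a)] (hna : ∀ a, ∃ x y : P a, x * y ≠ y * x)
    (f : ∀ a, H →* P a) (hf : ∀ a, Function.Surjective (f a))
    (hker : ∀ a b, (f a).ker = (f b).ker → a = b) (t : Finset J) (p : ∀ a, P a) :
    ∃ x, ∀ a ∈ t, f a x = p a := by
  classical
  have hle : ∀ a b, (f a).ker ≤ (f b).ker → a = b := by
    intro a b hab
    apply hker
    apply le_antisymm hab
    have hn : ((f b).ker.map (f a)).Normal := Subgroup.Normal.map inferInstance _ (hf a)
    rcases hn.eq_bot_or_eq_top with h | h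
    · exact (Subgroup.map_eq_bot_iff _).mp h
    · exfalso
      obtain ⟨w, hw⟩ := exists_ne (1 : P b)
      obtain ⟨x, rfl⟩ := hf b w
      obtain ⟨y, hy, hyx⟩ : f a x ∈ (f b).ker.map (f a) := by rw [h]; trivial
      have h1 : x * y⁻¹ ∈ (f b).ker := hab (by
        rw [MonoidHom.mem_ker, map_mul, map_inv, hyx, mul_inv_cancel])
      have h2 := (f b).ker.mul_mem h1 hy
      simp at h2
      exact hw h2
  have hinf : ∀ (t : Finset J) (b : J), (⨅ a ∈ t, (f a).ker) ≤ (f b).ker → b ∈ t := by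
    intro t b
    induction t using Finset.induction_on with
    | empty =>
      intro h
      exfalso
      obtain ⟨w, hw⟩ := exists_ne (1 : P b)
      obtain ⟨x, rfl⟩ := hf b w
      exact hw (h (by simp))
    | insert c t hc ih =>
      intro h
      rw [Finset.iInf_insert] at h
      have : (⨅ a ∈ t, (f a).ker).Normal :=
        Subgroup.normal_iInf_normal fun a => Subgroup.normal_iInf_normal fun _ => inferInstance
      rcases le_ker_of_inf_le (hna b) (f b) (hf b) _ _ h with h | h
      · rw [hle _ _ h]; simp
      · exact Finset.mem_insert_of_mem (ih h)
  induction t using Finset.induction_on with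
  | empty => exact ⟨1, by simp⟩
  | insert b t hb ih =>
    obtain ⟨x, hx⟩ := ih
    have : (⨅ a ∈ t, (f a).ker).Normal :=
      Subgroup.normal_iInf_normal fun a => Subgroup.normal_iInf_normal fun _ => inferInstance
    have hn : ((⨅ a ∈ t, (f a).ker).map (f b)).Normal := Subgroup.Normal.map this _ (hf b)
    rcases hn.eq_bot_or_eq_top with h | h
    · exact absurd (hinf t b ((Subgroup.map_eq_bot_iff _).mp h)) hb
    · obtain ⟨k, hk, hk2⟩ : (f b x)⁻¹ * p b ∈ (⨅ a ∈ t, (f a).ker).map (f b) := by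
        rw [h]; trivial
      refine ⟨x * k, ?_⟩
      intro a ha
      rcases Finset.mem_insert.mp ha with rfl | ha
      · rw [map_mul, hk2]; simp
      · rw [map_mul, hx a ha]
        have : k ∈ (f a).ker := by
          simp only [SetLike.mem_coe, Subgroup.mem_iInf] at hk
          exact hk a ha
        rw [MonoidHom.mem_ker.mp this, mul_one]

/-- Finitely many homomorphisms from a finitely generated group to a finite group. -/
theorem finite_hom (H P : Type*) [Group H] [Group P] [Group.FG H] [Finite P] :
    Finite (H →* P) := by
  obtain ⟨t, ht⟩ := (Group.fg_def.mp (inferInstance : Group.FG H))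
  apply Finite.of_injective (fun (f : H →* P) => fun x : t => f x)
  intro f g hfg
  apply MonoidHom.eq_of_eqOn_dense ht
  intro x hx
  exact congrFun hfg ⟨x, hx⟩

end RInf
namespace RInf

/-- The twisted norm `x * φ x * ⋯ * φ^(n-1) x`. -/
def tnorm {H : Type*} [Group H] (φ : H ≃* H) : ℕ → H → H
  | 0, _ => 1
  | n + 1, x => tnorm φ n x * (φ ^ n) x

theorem tnorm_conj {H : Type*} [Group H] (φ : H ≃* H) (n : ℕ) (x z : H) :
    tnorm φ n (z * x * (φ z)⁻¹) = z * tnorm φ n x * ((φ ^ n) z)⁻¹ := by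
  induction n with
  | zero => simp [tnorm]
  | succ n ih =>
    have : (φ ^ (n + 1)) z = (φ ^ n) (φ z) := by rw [pow_succ]; rfl
    rw [tnorm, tnorm, ih, this]
    simp [mul_assoc]

theorem tnorm_map {H P : Type*} [Group H] [Group P] (φ : H ≃* H) (f : H →* P) (n : ℕ) (x : H)
    (hx : ∀ j, 0 < j → j < n + 1 → f ((φ ^ j) x) = 1) : f (tnorm φ (n + 1) x) = f x := by
  induction n with
  | zero => simp [tnorm]
  | succ n ih =>
    rw [tnorm, map_mul, ih (fun j h1 h2 => hx j h1 (by omega)), hx (n + 1) (by omega) (by omega),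
      mul_one]

/-- The key criterion: infinitely many simple quotients give `R_∞`. -/
theorem reidemeisterInfinite_of_simple_quotients {H : Type*} [Group H] [Group.FG H]
    (P : ℕ → Type*) [∀ i, Group (P i)] [∀ i, Finite (P i)] [∀ i, IsSimpleGroup (P i)]
    (hna : ∀ i, ∃ x y : P i, x * y ≠ y * x)
    (hcard : ∀ i j, Nat.card (P i) = Nat.card (P j) → i = j)
    (hR : ∀ i, ∀ α : P i ≃* P i, ∃ g, ¬ TwistedConj α 1 g)
    (ρ : ∀ i, H →* P i) (hρ : ∀ i, Function.Surjective (ρ i)) (φ : H ≃* H) :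
    ReidemeisterInfinite φ := by
  classical
  let F : ∀ (i : ℕ) (j : ℕ), H →* P i := fun i j => (ρ i).comp (φ ^ j : H ≃* H).toMonoidHom
  have hF : ∀ i j x, F i j x = ρ i ((φ ^ j) x) := fun _ _ _ => rfl
  have hFs : ∀ i j, Function.Surjective (F i j) := fun i j =>
    (hρ i).comp (φ ^ j : H ≃* H).surjective
  have hex : ∀ i, ∃ n, (F i (n + 1)).ker = (ρ i).ker := by
    intro i
    have := finite_hom H (P i)
    obtain ⟨a, b, hab, hne⟩ := Finite.exists_ne_map_eq_of_infinite (F i)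
    wlog hlt : a < b generalizing a b
    · exact this b a hab.symm hne.symm (by omega)
    refine ⟨b - a - 1, ?_⟩
    have h2 : F i (b - a - 1 + 1) = ρ i := by
      ext x
      obtain ⟨y, rfl⟩ := (φ ^ a : H ≃* H).surjective x
      have h3 := DFunLike.congr_fun hne y
      rw [hF, hF] at h3
      rw [hF, h3]
      have : φ ^ b = φ ^ (b - a - 1 + 1) * φ ^ a := by rw [← pow_add]; congr 1; omega
      rw [this]; rfl
    rw [h2]
  let n : ℕ → ℕ := fun i => Nat.find (hex i)
  have hn : ∀ i, (F i (n i + 1)).ker = (ρ i).ker := fun i => Nat.find_spec (hex i)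
  have hmin : ∀ i j, j < n i → (F i (j + 1)).ker ≠ (ρ i).ker := fun i j h => Nat.find_min (hex i) h
  -- the induced automorphism
  have hα : ∀ i, ∃ α : P i ≃* P i, ∀ y, α (ρ i y) = ρ i ((φ ^ (n i + 1)) y) := by
    intro i
    let α₀ : P i →* P i := (ρ i).liftOfSurjective (hρ i) ⟨F i (n i + 1), (hn i).ge⟩
    have hα₀ : ∀ y, α₀ (ρ i y) = F i (n i + 1) y := fun y =>
      (ρ i).liftOfRightInverse_comp_apply _ _ ⟨F i (n i + 1), (hn i).ge⟩ y
    have hs : Function.Surjective α₀ := by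
      intro p
      obtain ⟨y, rfl⟩ := hFs i (n i + 1) p
      exact ⟨ρ i y, hα₀ y⟩
    exact ⟨MulEquiv.ofBijective α₀ ⟨Finite.injective_iff_surjective.mpr hs, hs⟩, hα₀⟩
  have hg : ∀ i, ∃ g : P i, ∀ y, g ≠ ρ i (y * ((φ ^ (n i + 1)) y)⁻¹) := by
    intro i
    obtain ⟨α, hα⟩ := hα i
    obtain ⟨g, hg⟩ := hR i α
    refine ⟨g, fun y hy => hg ⟨ρ i y, ?_⟩⟩
    rw [hα, hy]; simp
  choose g hg using hg
  -- the invariant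
  let I : H → ℕ → Prop := fun x i =>
    ∃ y, ρ i (tnorm φ (n i + 1) x) = ρ i (y * ((φ ^ (n i + 1)) y)⁻¹)
  have hI1 : ∀ x z i, I x i → I (z * x * (φ z)⁻¹) i := by
    rintro x z i ⟨y, hy⟩
    refine ⟨z * y, ?_⟩
    rw [tnorm_conj, map_mul, map_mul, hy]
    simp [mul_assoc]
  have hI : ∀ x x', TwistedConj φ x x' → I x = I x' := by
    intro x x' h
    funext i
    apply propext
    constructor
    · obtain ⟨z, rfl⟩ := h
      exact hI1 x z i
    · obtain ⟨z, rfl⟩ := (twistedConj_equivalence φ).symm h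
      exact hI1 _ z i
  let J : Quot (TwistedConj φ) → ℕ → Prop := Quot.lift I hI
  -- surjectivity on finite pieces
  have hkerne : ∀ i j j', j < j' → j' < n i + 1 → (F i j).ker ≠ (F i j').ker := by
    intro i j j' h1 h2 h
    apply hmin i (j' - j - 1) (by omega)
    ext x
    obtain ⟨y, rfl⟩ := (φ ^ j : H ≃* H).surjective x
    have h3 : y ∈ (F i j).ker ↔ y ∈ (F i j').ker := by rw [h]
    rw [MonoidHom.mem_ker, MonoidHom.mem_ker, hF, hF] at h3
    rw [MonoidHom.mem_ker, MonoidHom.mem_ker, hF, h3]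
    have : φ ^ j' = φ ^ (j' - j - 1 + 1) * φ ^ j := by rw [← pow_add]; congr 1; omega
    rw [this]; rfl
  have hsurj : ∀ (k : ℕ) (T : Fin k → Prop), ∃ x : H, ∀ i : Fin k, I x i = T i := by
    intro k T
    let Jt := Σ i : Fin k, Fin (n i + 1)
    obtain ⟨x, hx⟩ := crt (H := H) (J := Jt) (P := fun a => P a.1)
      (fun a => hna a.1) (fun a => F a.1 a.2) (fun a => hFs _ _) (by
        rintro ⟨i, j⟩ ⟨i', j'⟩ h
        simp only at h
        have h1 : (i : ℕ) = i' := by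
          apply hcard
          have e1 := Subgroup.index_ker (F i j)
          have e2 := Subgroup.index_ker (F i' j')
          rw [h, e2] at e1
          rw [MonoidHom.range_eq_top.mpr (hFs _ _), MonoidHom.range_eq_top.mpr (hFs _ _)] at e1
          simpa using e1.symm
        have h1' : i = i' := Fin.ext h1
        subst h1'
        have : j = j' := by
          rcases lt_trichotomy j j' with h2 | h2 | h2
          · exact absurd h (hkerne i j j' h2 j'.2)
          · exact h2
          · exact absurd h.symm (hkerne i j' j h2 j.2)
        rw [this]) Finset.univ
      (fun a => if (a.2 : ℕ) = 0 then (if T a.1 then 1 else g a.1) else 1)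
    refine ⟨x, fun i => ?_⟩
    have h0 := hx ⟨i, 0⟩ (Finset.mem_univ _)
    have hj : ∀ j, 0 < j → j < n i + 1 → ρ i ((φ ^ j) x) = 1 := by
      intro j h1 h2
      have := hx ⟨i, ⟨j, h2⟩⟩ (Finset.mem_univ _)
      simpa [hF, h1.ne'] using this
    have hN := tnorm_map φ (ρ i) (n i) x hj
    have h0' : ρ i x = if T i then 1 else g i := by simpa [hF] using h0
    apply propext
    constructor
    · rintro ⟨y, hy⟩
      by_contra hT
      rw [hN, h0', if_neg hT] at hy
      exact hg i y hy
    · intro hT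
      refine ⟨1, ?_⟩
      rw [hN, h0', if_pos hT]; simp
  change Infinite _
  by_contra hfin
  rw [not_infinite_iff_finite] at hfin
  let k := Nat.card (Quot (TwistedConj φ))
  have hs : Function.Surjective (fun (c : Quot (TwistedConj φ)) (i : Fin k) => J c i) := by
    intro T
    obtain ⟨x, hx⟩ := hsurj k T
    exact ⟨Quot.mk _ x, funext hx⟩
  have := Nat.card_le_card_of_surjective _ hs
  rw [Nat.card_fun] at this
  have h2 : Nat.card Prop = 2 := by simp
  rw [h2, Nat.card_fin] at this
  exact absurd this (by simpa [k] using Nat.lt_two_pow_self)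

/-- Transfer from an invariant finite-index subgroup. -/
theorem reidemeisterInfinite_of_subgroup {G : Type*} [Group G] (K : Subgroup G) [K.FiniteIndex]
    (φ : G ≃* G) (ψ : K ≃* K) (hψ : ∀ x : K, (ψ x : G) = φ x) (h : ReidemeisterInfinite ψ) :
    ReidemeisterInfinite φ := by
  change Infinite _
  by_contra hfin
  rw [not_infinite_iff_finite] at hfin
  have hinf : Infinite (Quot (TwistedConj ψ)) := h
  let f : Quot (TwistedConj ψ) → Quot (TwistedConj φ) :=
    Quot.map (fun x : K => (x : G)) (by
      rintro a b ⟨x, rfl⟩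
      exact ⟨x, by simp [hψ]⟩)
  obtain ⟨c, hc⟩ := Finite.exists_infinite_fiber f
  obtain ⟨⟨d, hd⟩⟩ := (inferInstance : Nonempty (f ⁻¹' {c}))
  obtain ⟨h0, rfl⟩ := Quot.exists_rep d
  -- the fibre is covered by cosets
  let r : G ⧸ K → G := Quotient.out
  have hsub : (f ⁻¹' {c}) ⊆ Set.range (fun q : G ⧸ K =>
      (open Classical in if hq : (r q)⁻¹ * h0 * (φ (r q)⁻¹)⁻¹ ∈ K then
        Quot.mk (TwistedConj ψ) ⟨_, hq⟩ else Quot.mk _ 1)) := by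
    intro e he
    obtain ⟨h1, rfl⟩ := Quot.exists_rep e
    have heq : f (Quot.mk _ h0) = f (Quot.mk _ h1) := by
      rw [Set.mem_preimage, Set.mem_singleton_iff] at hd he
      rw [hd, he]
    have htw : TwistedConj φ (h0 : G) h1 :=
      ((twistedConj_equivalence φ).quot_mk_eq_iff _ _).mp heq
    obtain ⟨x, hx⟩ := htw
    refine ⟨(x⁻¹ : G), ?_⟩
    have hk : (r (x⁻¹ : G))⁻¹ * x⁻¹ ∈ K := QuotientGroup.eq.mp (Quotient.out_eq _)
    set y := r (x⁻¹ : G) with hy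
    have hx2 : y⁻¹ * h0 * (φ y⁻¹)⁻¹ = (y⁻¹ * x⁻¹) * h1 * (φ (y⁻¹ * x⁻¹))⁻¹ := by
      rw [hx]; simp [mul_assoc]
    have hmem : y⁻¹ * h0 * (φ y⁻¹)⁻¹ ∈ K := by
      rw [hx2]
      refine K.mul_mem (K.mul_mem hk h1.2) (K.inv_mem ?_)
      have := (ψ ⟨_, hk⟩).2
      rwa [hψ] at this
    simp only
    rw [dif_pos hmem]
    apply ((twistedConj_equivalence ψ).quot_mk_eq_iff _ _).mpr
    apply (twistedConj_equivalence ψ).symm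
    refine ⟨⟨_, hk⟩, ?_⟩
    apply Subtype.ext
    simp only [Subgroup.coe_mul, Subgroup.coe_inv, hψ]
    exact hx2
  have : (f ⁻¹' {c}).Finite := (Set.finite_range _).subset hsub
  exact (Set.infinite_coe_iff.mp hc) this

end RInf
namespace RInf

theorem alt_generators (q : ℕ) (hq : q.Prime) (h5 : 5 ≤ q) :
    ∃ a b : alternatingGroup (Fin q), ∀ N : Subgroup (alternatingGroup (Fin q)),
      a ∈ N → b ∈ N → N = ⊤ := by
  have hodd : Odd q := hq.odd_of_ne_two (by omega)
  let x0 : Fin q := ⟨0, by omega⟩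
  let x1 : Fin q := ⟨1, by omega⟩
  let x2 : Fin q := ⟨2, by omega⟩
  have h3 : (Equiv.swap x0 x1 * Equiv.swap x0 x2).IsThreeCycle :=
    Equiv.Perm.isThreeCycle_swap_mul_swap_same (by simp [x0, x1]) (by simp [x0, x2])
      (by simp [x1, x2])
  have hrot : finRotate q ∈ alternatingGroup (Fin q) := by
    rw [Equiv.Perm.mem_alternatingGroup, sign_finRotate]
    exact (Nat.Odd.sub_odd hodd odd_one).neg_one_pow
  refine ⟨⟨_, h3.mem_alternatingGroup⟩, ⟨_, hrot⟩, fun N ha hb => ?_⟩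
  let N' := N.map (alternatingGroup (Fin q)).subtype
  have ha' : Equiv.swap x0 x1 * Equiv.swap x0 x2 ∈ N' := ⟨_, ha, rfl⟩
  have hb' : finRotate q ∈ N' := ⟨_, hb, rfl⟩
  have htrans : MulAction.IsPretransitive N' (Fin q) := by
    refine ⟨fun x y => ?_⟩
    have hc : (finRotate q).IsCycle := isCycle_finRotate_of_le (by omega)
    have hs : ∀ z : Fin q, finRotate q z ≠ z := fun z => by
      rw [← Equiv.Perm.mem_support, support_finRotate_of_le (by omega)]; simp
    obtain ⟨i, hi⟩ := hc.exists_zpow_eq (hs x) (hs y)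
    exact ⟨⟨_, N'.zpow_mem hb' i⟩, hi⟩
  have hprim : MulAction.IsPreprimitive N' (Fin q) :=
    MulAction.IsPreprimitive.of_prime_card (by simpa using hq)
  have hle := Equiv.Perm.alternatingGroup_le_of_isPreprimitive_of_isThreeCycle_mem hprim h3 ha'
  rw [eq_top_iff]
  rintro ⟨g, hg⟩ -
  obtain ⟨g', hg', h⟩ := hle hg
  have : g' = ⟨g, hg⟩ := Subtype.ext h
  rwa [← this]

theorem two_mul_card_alt (q : ℕ) (h5 : 5 ≤ q) :
    2 * Nat.card (alternatingGroup (Fin q)) = q.factorial := by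
  have : Nontrivial (Fin q) := Fin.nontrivial_iff_two_le.mpr (by omega)
  rw [two_mul_nat_card_alternatingGroup, Nat.card_perm, Nat.card_fin]

theorem alt_R (q : ℕ) (hq : q.Prime) (h5 : 5 ≤ q)
    (α : alternatingGroup (Fin q) ≃* alternatingGroup (Fin q)) :
    ∃ g, ¬ TwistedConj α 1 g := by
  have : Fact q.Prime := ⟨hq⟩
  have := alternatingGroup.isSimpleGroup (α := Fin q) (by simpa using h5)
  have hcard := two_mul_card_alt q h5
  have hfac : (Nat.card (alternatingGroup (Fin q))).factorization q = 1 := by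
    have h1 : (2 * Nat.card (alternatingGroup (Fin q))).factorization q = 1 := by
      rw [hcard]
      obtain ⟨r, rfl⟩ : ∃ r, q = r + 1 := ⟨q - 1, by omega⟩
      rw [Nat.factorial_succ, Nat.factorization_mul (by omega) (Nat.factorial_ne_zero _)]
      rw [Finsupp.add_apply, hq.factorization_self,
        Nat.factorization_eq_zero_of_not_dvd (by rw [hq.dvd_factorial]; omega)]
    rw [Nat.factorization_mul (by omega) Nat.card_pos.ne', Finsupp.add_apply,
      Nat.factorization_eq_zero_of_not_dvd (n := 2)
        (fun h => by have := Nat.le_of_dvd (by omega) h; omega)] at h1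
    omega
  apply exists_not_twistedConj_one ?_ q
  · exact Nat.dvd_of_factorization_pos (by omega)
  · intro T
    apply isCyclic_of_prime_card (p := q)
    rw [T.card_eq_multiplicity, hfac, pow_one]
  · by_contra hcon
    push Not at hcon
    have h1 := alternatingGroup.center_eq_bot (α := Fin q) (by simp; omega)
    obtain ⟨x, hx⟩ := exists_ne (1 : alternatingGroup (Fin q))
    have : x ∈ Subgroup.center (alternatingGroup (Fin q)) :=
      Subgroup.mem_center_iff.mpr fun g => hcon g x
    rw [h1] at this
    exact hx (by simpa using this)

theorem alt_nonabelian (q : ℕ) (h5 : 5 ≤ q) :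
    ∃ x y : alternatingGroup (Fin q), x * y ≠ y * x := by
  have := alternatingGroup.isSimpleGroup (α := Fin q) (by simpa using h5)
  by_contra hcon
  push Not at hcon
  have h1 := alternatingGroup.center_eq_bot (α := Fin q) (by simp; omega)
  obtain ⟨x, hx⟩ := exists_ne (1 : alternatingGroup (Fin q))
  have : x ∈ Subgroup.center (alternatingGroup (Fin q)) :=
    Subgroup.mem_center_iff.mpr fun g => hcon g x
  rw [h1] at this
  exact hx (by simpa using this)

/-- A finitely generated group mapping onto all alternating groups of large prime degree. -/
theorem reidemeisterInfinite_of_alt {H : Type*} [Group H] [Group.FG H]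
    (h : ∀ q : ℕ, q.Prime → 5 ≤ q →
      ∃ f : H →* alternatingGroup (Fin q), Function.Surjective f) (φ : H ≃* H) :
    ReidemeisterInfinite φ := by
  let Q : ℕ → ℕ := fun i => Nat.nth Nat.Prime (i + 2)
  have hQmono : StrictMono Q := fun i j hij =>
    Nat.nth_strictMono Nat.infinite_setOfPred_prime (by omega)
  have hQp : ∀ i, (Q i).Prime := fun i => Nat.prime_nth_prime _
  have hQ5 : ∀ i, 5 ≤ Q i := by
    intro i
    have h0 : 2 ≤ Nat.nth Nat.Prime 0 := (Nat.prime_nth_prime 0).two_le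
    have h1 : Nat.nth Nat.Prime 0 < Nat.nth Nat.Prime 1 :=
      Nat.nth_strictMono Nat.infinite_setOfPred_prime (by omega)
    have h2 : Nat.nth Nat.Prime 1 < Nat.nth Nat.Prime (i + 2) :=
      Nat.nth_strictMono Nat.infinite_setOfPred_prime (by omega)
    have h3 : Q i ≠ 4 := fun h4 => by
      have := hQp i
      rw [h4] at this
      exact absurd this (by norm_num)
    change 5 ≤ Q i
    have h5 : Q i = Nat.nth Nat.Prime (i + 2) := rfl
    omega
  have hsimp : ∀ i, IsSimpleGroup (alternatingGroup (Fin (Q i))) := fun i =>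
    alternatingGroup.isSimpleGroup (by simpa using hQ5 i)
  choose ρ hρ using fun i => h (Q i) (hQp i) (hQ5 i)
  apply reidemeisterInfinite_of_simple_quotients (fun i => alternatingGroup (Fin (Q i)))
    (fun i => alt_nonabelian _ (hQ5 i)) ?_ (fun i => alt_R _ (hQp i) (hQ5 i)) ρ hρ
  intro i j hij
  have h1 := two_mul_card_alt _ (hQ5 i)
  have h2 := two_mul_card_alt _ (hQ5 j)
  rw [hij, h2] at h1
  have := hQ5 i
  exact hQmono.injective ((Nat.factorial_inj (by omega)).mp h1.symm)

/-- Subgroups of free groups that are not abelian map onto two-generator groups. -/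
theorem free_quotient {F : Type*} [Group F] [IsFreeGroup F]
    (hna : ∃ x y : F, x * y ≠ y * x) {P : Type*} [Group P] (a b : P)
    (hab : ∀ N : Subgroup P, a ∈ N → b ∈ N → N = ⊤) :
    ∃ f : F →* P, Function.Surjective f := by
  classical
  let e := IsFreeGroup.toFreeGroup F
  obtain ⟨i, j, hij⟩ : ∃ i j : IsFreeGroup.Generators F, i ≠ j := by
    by_contra hcon
    push Not at hcon
    have hs : Subsingleton (IsFreeGroup.Generators F) := ⟨hcon⟩
    obtain ⟨x, y, hxy⟩ := hna
    apply hxy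
    apply e.injective
    rw [map_mul, map_mul]
    rcases isEmpty_or_nonempty (IsFreeGroup.Generators F) with h | ⟨⟨i⟩⟩
    · exact Subsingleton.elim _ _
    · have hz : ∀ w : FreeGroup (IsFreeGroup.Generators F),
          w ∈ Subgroup.zpowers (FreeGroup.of i) := by
        intro w
        have : (⊤ : Subgroup (FreeGroup (IsFreeGroup.Generators F))) ≤
            Subgroup.zpowers (FreeGroup.of i) := by
          rw [← FreeGroup.closure_range_of, Subgroup.closure_le]
          rintro _ ⟨k, rfl⟩
          rw [hcon k i]
          exact Subgroup.mem_zpowers _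
        exact this trivial
      obtain ⟨m, hm⟩ := hz (e x)
      obtain ⟨n, hn⟩ := hz (e y)
      simp only at hm hn
      rw [← hm, ← hn, ← zpow_add, ← zpow_add, add_comm]
  let f₀ : FreeGroup (IsFreeGroup.Generators F) →* P :=
    FreeGroup.lift (fun k => if k = i then a else b)
  refine ⟨f₀.comp e.toMonoidHom, ?_⟩
  have h0 : Function.Surjective f₀ := by
    rw [← MonoidHom.range_eq_top]
    apply hab
    · exact ⟨FreeGroup.of i, by simp [f₀]⟩
    · exact ⟨FreeGroup.of j, by simp [f₀, hij.symm]⟩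
  exact h0.comp e.surjective

theorem free_pow_ne (k : ℕ) (hk : 0 < k) :
    (FreeGroup.of true) ^ k * (FreeGroup.of false) ^ k ≠
      (FreeGroup.of false) ^ k * (FreeGroup.of true) ^ k := by
  intro h
  let A : Matrix.SpecialLinearGroup (Fin 2) ℤ := ⟨!![1, 1; 0, 1], by simp⟩
  let B : Matrix.SpecialLinearGroup (Fin 2) ℤ := ⟨!![1, 0; 1, 1], by simp⟩
  have hA : ∀ n : ℕ, ((A ^ n : Matrix.SpecialLinearGroup (Fin 2) ℤ) :
      Matrix (Fin 2) (Fin 2) ℤ) = !![1, (n : ℤ); 0, 1] := by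
    intro n
    induction n with
    | zero => ext i j; fin_cases i <;> fin_cases j <;> simp
    | succ n ih =>
      rw [pow_succ, Matrix.SpecialLinearGroup.coe_mul, ih]
      ext i j; fin_cases i <;> fin_cases j <;> simp [A, Matrix.mul_apply, Fin.sum_univ_two] <;> ring
  have hB : ∀ n : ℕ, ((B ^ n : Matrix.SpecialLinearGroup (Fin 2) ℤ) :
      Matrix (Fin 2) (Fin 2) ℤ) = !![1, 0; (n : ℤ), 1] := by
    intro n
    induction n with
    | zero => ext i j; fin_cases i <;> fin_cases j <;> simp
    | succ n ih =>
      rw [pow_succ, Matrix.SpecialLinearGroup.coe_mul, ih]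
      ext i j; fin_cases i <;> fin_cases j <;> simp [B, Matrix.mul_apply, Fin.sum_univ_two]
  have h1 := congrArg (FreeGroup.lift (fun c : Bool => if c then A else B)) h
  simp only [map_mul, map_pow, FreeGroup.lift_apply_of] at h1
  have h2 := congrArg (fun z : Matrix.SpecialLinearGroup (Fin 2) ℤ =>
    (z : Matrix (Fin 2) (Fin 2) ℤ) 0 0) h1
  simp only [if_true, Matrix.SpecialLinearGroup.coe_mul] at h2
  simp [hA, hB, Matrix.mul_apply, Fin.sum_univ_two] at h2
  omega

end RInf
namespace RInf

/-- Alternating word in a group. -/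
def alt {G : Type*} [Group G] (s t : G) (m : ℕ) : G :=
  ((List.range m).map (fun k => if k % 2 = 0 then s else t)).prod

theorem alt_succ {G : Type*} [Group G] (s t : G) (m : ℕ) :
    alt s t (m + 1) = alt s t m * (if m % 2 = 0 then s else t) := by
  simp [alt, List.range_succ]

theorem lift_altWord {S G : Type*} [Group G] (f : S → G) (s t : S) (m : ℕ) :
    FreeGroup.lift f (altWord s t m) = alt (f s) (f t) m := by
  unfold altWord alt
  rw [map_list_prod, List.map_map]
  congr 1
  apply List.map_congr_left
  intro k _
  simp only [Function.comp]
  split_ifs <;> simp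

theorem alt_two_mul {G : Type*} [Group G] (s t : G) (j : ℕ) :
    alt s t (2 * j) = (s * t) ^ j := by
  induction j with
  | zero => simp [alt]
  | succ j ih =>
    have h1 : 2 * (j + 1) = 2 * j + 1 + 1 := by ring
    rw [h1, alt_succ, alt_succ, ih, if_pos (by omega), if_neg (by omega), pow_succ]
    simp [mul_assoc]

theorem alt_two_mul_add_one {G : Type*} [Group G] (s t : G) (j : ℕ) :
    alt s t (2 * j + 1) = (s * t) ^ j * s := by
  rw [alt_succ, alt_two_mul, if_pos (by omega)]

section inv
variable {G : Type*} [Group G]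

theorem swap_pow {s t : G} (hs : s * s = 1) (ht : t * t = 1) (i : ℕ) :
    (t * s) ^ i = ((s * t) ^ i)⁻¹ := by
  rw [← inv_pow, mul_inv_rev, ← eq_inv_of_mul_eq_one_left hs, ← eq_inv_of_mul_eq_one_left ht]

theorem conj_pow_inv {s t : G} (hs : s * s = 1) (ht : t * t = 1) (i : ℕ) :
    s * (s * t) ^ i * s = ((s * t) ^ i)⁻¹ := by
  have hs' : s⁻¹ = s := (eq_inv_of_mul_eq_one_left hs).symm
  have : s * (s * t) ^ i * s⁻¹ = (t * s) ^ i := by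
    rw [← conj_pow]; congr 1
    rw [hs', ← mul_assoc, hs, one_mul]
  rw [hs'] at this
  rw [this, swap_pow hs ht]

/-- The `i`-th reflection crossed by an alternating word. -/
theorem alt_conj {s t : G} (hs : s * s = 1) (ht : t * t = 1) (i : ℕ) :
    alt s t i * (if i % 2 = 0 then s else t) * (alt s t i)⁻¹ = (s * t) ^ i * s := by
  have hs' : s⁻¹ = s := (eq_inv_of_mul_eq_one_left hs).symm
  have key : ∀ j : ℕ, s * ((s * t) ^ j)⁻¹ = (s * t) ^ j * s := by
    intro j
    rw [← conj_pow_inv hs ht j, ← mul_assoc, ← mul_assoc, hs, one_mul]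
  rcases Nat.even_or_odd' i with ⟨j, rfl | rfl⟩
  · rw [alt_two_mul, if_pos (by omega), mul_assoc, key, ← mul_assoc, ← pow_add, two_mul]
  · rw [alt_two_mul_add_one, if_neg (by omega), mul_inv_rev, hs']
    rw [mul_assoc, key j]
    have : (s * t) ^ (2 * j + 1) = (s * t) ^ j * (s * t) * (s * t) ^ j := by
      rw [← pow_succ, ← pow_add]; congr 1; ring
    rw [this]; simp only [mul_assoc]

theorem alt_rel {s t : G} (hs : s * s = 1) (ht : t * t = 1) {m : ℕ} (hm : (s * t) ^ m = 1) :
    alt s t m = alt t s m := by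
  rcases Nat.even_or_odd' m with ⟨j, rfl | rfl⟩
  · rw [alt_two_mul, alt_two_mul, swap_pow hs ht]
    apply eq_inv_of_mul_eq_one_left
    rw [← pow_add, ← two_mul, hm]
  · rw [alt_two_mul_add_one, alt_two_mul_add_one, swap_pow hs ht]
    rw [eq_inv_mul_iff_mul_eq, ← mul_assoc, ← pow_add, ← two_mul]
    rw [pow_succ] at hm
    have h1 := eq_inv_of_mul_eq_one_left hm
    rw [h1, mul_inv_rev, mul_assoc, inv_mul_cancel, mul_one]
    exact (eq_inv_of_mul_eq_one_left ht).symm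

end inv

/-- The wreath product element attached to a reflection. -/
def wgen {Q F : Type*} [Group Q] [Group F] (g : Q → F) (s : Q) : F ≀ᵣ Q :=
  ⟨fun x => g (x⁻¹ * s * x), s⟩

theorem wgen_alt_right {Q F : Type*} [Group Q] [Group F] (g : Q → F) (s t : Q) (m : ℕ) :
    (alt (wgen g s) (wgen g t) m).right = alt s t m := by
  induction m with
  | zero => simp [alt]
  | succ m ih =>
    rw [alt_succ, alt_succ, RegularWreathProduct.mul_right, ih]
    split_ifs <;> rfl

theorem wgen_alt_left {Q F : Type*} [Group Q] [Group F] (g : Q → F) (s t : Q)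
    (hs : s * s = 1) (ht : t * t = 1) (m : ℕ) (x : Q) :
    (alt (wgen g s) (wgen g t) m).left x =
      ((List.range m).map (fun i => g (x⁻¹ * ((s * t) ^ i * s) * x))).prod := by
  induction m with
  | zero => simp [alt]
  | succ m ih =>
    rw [alt_succ, RegularWreathProduct.mul_left, Pi.mul_apply, ih, List.range_succ,
      List.map_append, List.prod_append, wgen_alt_right]
    congr 1
    rw [List.map_singleton, List.prod_singleton, ← alt_conj hs ht m]
    split_ifs <;> simp [wgen, mul_assoc]

theorem wgen_rel {Q F : Type*} [Group Q] [Group F] (g : Q → F) (s t : Q)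
    (hs : s * s = 1) (ht : t * t = 1) (m : ℕ) (hm : (s * t) ^ m = 1)
    (hcomm : ∀ x i j, Commute (g (x⁻¹ * ((s * t) ^ i * s) * x))
      (g (x⁻¹ * ((s * t) ^ j * s) * x))) :
    alt (wgen g s) (wgen g t) m = alt (wgen g t) (wgen g s) m := by
  apply RegularWreathProduct.ext
  · funext x
    rw [wgen_alt_left g s t hs ht, wgen_alt_left g t s ht hs]
    have hrev : (List.range m).map (fun i => g (x⁻¹ * ((t * s) ^ i * t) * x)) =
        ((List.range m).map (fun i => g (x⁻¹ * ((s * t) ^ i * s) * x))).reverse := by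
      rw [← List.map_reverse]
      apply List.ext_getElem
      · simp
      · intro i h1 h2
        simp only [List.getElem_map, List.getElem_range, List.getElem_reverse, List.length_range]
        have hi : i < m := by simpa using h1
        congr 3
        have e1 : (s * t) ^ (m - 1 - i) * ((s * t) * (s * t) ^ i) = 1 := by
          rw [← pow_succ', ← pow_add, ← hm]; congr 1; omega
        rw [eq_inv_of_mul_eq_one_left e1, mul_inv_rev, swap_pow hs ht, mul_assoc]
        congr 1
        rw [mul_inv_rev, mul_assoc, ← eq_inv_of_mul_eq_one_left hs, hs, mul_one]
        exact eq_inv_of_mul_eq_one_left ht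
    rw [hrev]
    apply List.Perm.prod_eq' (List.reverse_perm _).symm
    rw [List.pairwise_map]
    exact List.pairwise_of_forall (fun i j => hcomm x i j)
  · rw [wgen_alt_right, wgen_alt_right, alt_rel hs ht hm]

theorem artin_of_finite_quotient {S : Type*} [Finite S] (M : S → S → ℕ)
    {Q : Type*} [Group Q] [Finite Q] (r : S → Q) (hinv : ∀ s, r s * r s = 1)
    (hrel : ∀ s t, s ≠ t → 2 ≤ M s t → (r s * r t) ^ M s t = 1)
    (L : ℕ) (hL : ∀ s t, s ≠ t → 2 ≤ M s t → M s t ∣ L)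
    (a b c : S) (hne : (r a * (r b * r c * r b)) ^ L ≠ 1) :
    PropertyRInfinity (ArtinGroup M) := by
  classical
  let u := r a
  let v := r b * r c * r b
  have huv : u ≠ v := by
    intro h
    apply hne
    change (u * v) ^ L = 1
    rw [← h, hinv, one_pow]
  let X : FreeGroup Bool := FreeGroup.of true
  let Y : FreeGroup Bool := FreeGroup.of false
  let g : Q → FreeGroup Bool := fun z => if z = u then X else if z = v then Y else 1
  have hgu : g u = X := by simp [g]
  have hgv : g v = Y := by simp [g, huv.symm]
  have hg3 : ∀ z, z ≠ u → z ≠ v → g z = 1 := fun z h1 h2 => by simp [g, h1, h2]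
  -- no rank two residue contains both reflections
  have hres : ∀ s t, s ≠ t → 2 ≤ M s t → ∀ x i j,
      x⁻¹ * ((r s * r t) ^ i * r s) * x = u → x⁻¹ * ((r s * r t) ^ j * r s) * x = v → False := by
    intro s t hst h2 x i j h3 h4
    apply hne
    change (u * v) ^ L = 1
    obtain ⟨k, hk⟩ := hL s t hst h2
    have h5 : u * v = x⁻¹ * ((r s * r t) ^ i * ((r s * r t) ^ j)⁻¹) * x⁻¹⁻¹ := by
      rw [← h3, ← h4, ← conj_pow_inv (hinv s) (hinv t)]
      simp [mul_assoc]
    have h6 : Commute ((r s * r t) ^ i) ((r s * r t) ^ j)⁻¹ :=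
      ((Commute.refl (r s * r t)).pow_pow i j).inv_right
    rw [hk, pow_mul, h5, conj_pow, h6.mul_pow, inv_pow, ← pow_mul, ← pow_mul, mul_comm i,
      mul_comm j, pow_mul, pow_mul, hrel s t hst h2]
    simp
  have hcomm : ∀ s t, s ≠ t → 2 ≤ M s t → ∀ x i j,
      Commute (g (x⁻¹ * ((r s * r t) ^ i * r s) * x))
        (g (x⁻¹ * ((r s * r t) ^ j * r s) * x)) := by
    intro s t hst h2 x i j
    have hr := hres s t hst h2 x
    by_cases h1 : x⁻¹ * ((r s * r t) ^ i * r s) * x = u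
    · by_cases h3 : x⁻¹ * ((r s * r t) ^ j * r s) * x = u
      · rw [h1, h3]
      · rw [hg3 _ h3 (fun h => hr i j h1 h)]; exact Commute.one_right _
    · by_cases h3 : x⁻¹ * ((r s * r t) ^ i * r s) * x = v
      · by_cases h4 : x⁻¹ * ((r s * r t) ^ j * r s) * x = v
        · rw [h3, h4]
        · rw [hg3 (x⁻¹ * ((r s * r t) ^ j * r s) * x) (fun h => hr j i h h3) h4]
          exact Commute.one_right _
      · rw [hg3 _ h1 h3]; exact Commute.one_left _
  have hθ : ∀ w ∈ artinRels M, FreeGroup.lift (fun s => wgen g (r s)) w = 1 := by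
    rintro w ⟨s, t, hst, h2, rfl⟩
    rw [map_mul, map_inv, lift_altWord, lift_altWord, mul_inv_eq_one]
    exact wgen_rel g _ _ (hinv s) (hinv t) _ (hrel s t hst h2) (hcomm s t hst h2)
  let θ : ArtinGroup M →* (FreeGroup Bool) ≀ᵣ Q := PresentedGroup.toGroup hθ
  have hθof : ∀ s, θ (artinGen M s) = wgen g (r s) := fun s => PresentedGroup.toGroup.of hθ
  have hFG : Group.FG (ArtinGroup M) :=
    Group.fg_of_surjective (f := PresentedGroup.mk (artinRels M))
      (PresentedGroup.mk_surjective (artinRels M))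
  -- the characteristic subgroup
  have hfin : Finite (ArtinGroup M →* Q) := finite_hom _ _
  let ev : ArtinGroup M →* ((ArtinGroup M →* Q) → Q) := MonoidHom.pi (fun f => f)
  let K : Subgroup (ArtinGroup M) := ev.ker
  have hKmem : ∀ x, x ∈ K ↔ ∀ f : ArtinGroup M →* Q, f x = 1 := by
    intro x
    rw [MonoidHom.mem_ker, funext_iff]
    rfl
  have hKfi : K.FiniteIndex := by
    have : Finite ev.range := inferInstance
    exact ⟨by rw [Subgroup.index_ker]; exact Nat.card_pos.ne'⟩
  have hKfg : Group.FG K := inferInstance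
  have hK1 : ∀ x : K, (θ x).right = 1 := fun x =>
    (hKmem x).mp x.2 (RegularWreathProduct.rightHom.comp θ)
  let θK : K →* FreeGroup Bool :=
    { toFun := fun x => (θ x).left 1
      map_one' := by simp
      map_mul' := fun x y => by simp [hK1] }
  let k := Nat.card Q
  have hk : 0 < k := Nat.card_pos
  have hpow : ∀ x : ArtinGroup M, x ^ k ∈ K := by
    intro x
    rw [hKmem]
    intro f
    rw [map_pow]
    exact pow_card_eq_one'
  have hleft : ∀ (s : S) (n : ℕ) (x : Q),
      ((wgen g (r s)) ^ n).left x = g (x⁻¹ * r s * x) ^ n := by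
    intro s n x
    have h1 : alt (wgen g (r s)) (wgen g (r s)) n = (wgen g (r s)) ^ n := by
      simp [alt]
    rw [← h1, wgen_alt_left g _ _ (hinv s) (hinv s)]
    simp [hinv]
  have hright : ∀ (s : S), ((wgen g (r s)) ^ k).right = 1 := by
    intro s
    have h1 : ((wgen g (r s)) ^ k).right = r s ^ k :=
      map_pow (RegularWreathProduct.rightHom : (FreeGroup Bool) ≀ᵣ Q →* Q) (wgen g (r s)) k
    rw [h1]; exact pow_card_eq_one'
  let A : K := ⟨(artinGen M a) ^ k, hpow _⟩
  let B : K := ⟨artinGen M b * (artinGen M c) ^ k * (artinGen M b)⁻¹, by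
    rw [hKmem]; intro f
    rw [map_mul, map_mul, (hKmem _).mp (hpow _) f]; simp⟩
  have hA : θK A = X ^ k := by
    change (θ ((artinGen M a) ^ k)).left 1 = _
    rw [map_pow, hθof, hleft]
    simp only [inv_one, one_mul, mul_one]
    rw [show r a = u from rfl, hgu]
  have hB : θK B = g (r b) * Y ^ k * (g (r b))⁻¹ := by
    change (θ (artinGen M b * (artinGen M c) ^ k * (artinGen M b)⁻¹)).left 1 = _
    rw [map_mul, map_mul, map_inv, map_pow, hθof, hθof]
    simp only [RegularWreathProduct.mul_left, RegularWreathProduct.mul_right,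
      RegularWreathProduct.inv_left, Pi.mul_apply, hleft, hright, Pi.inv_apply]
    have hb : (r b)⁻¹ = r b := (eq_inv_of_mul_eq_one_left (hinv b)).symm
    have h1 : ((r b)⁻¹ * 1)⁻¹ * r c * ((r b)⁻¹ * 1) = v := by
      simp [hb, v]
    simp only [wgen, h1, hgv]
    simp
  have hnc : ∃ x y : θK.range, x * y ≠ y * x := by
    refine ⟨⟨_, A, rfl⟩, ⟨_, B, rfl⟩, ?_⟩
    intro h
    have h1 : θK A * θK B = θK B * θK A := congrArg Subtype.val h
    rw [hA, hB] at h1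
    have hXY : X ^ k * Y ^ k ≠ Y ^ k * X ^ k := free_pow_ne k hk
    apply hXY
    have hcases : g (r b) = X ∨ g (r b) = Y ∨ g (r b) = 1 := by
      simp only [g]; split_ifs <;> simp
    rcases hcases with h2 | h2 | h2
    · rw [h2] at h1
      have h3 : X ^ k * X = X * X ^ k := (Commute.self_pow X k).symm.eq
      have h4 : X⁻¹ * X ^ k = X ^ k * X⁻¹ := ((Commute.refl X).inv_left.pow_right k).eq
      have h5 : X * (X ^ k * Y ^ k) * X⁻¹ = X * (Y ^ k * X ^ k) * X⁻¹ := by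
        calc X * (X ^ k * Y ^ k) * X⁻¹ = (X * X ^ k) * Y ^ k * X⁻¹ := by simp [mul_assoc]
          _ = X ^ k * (X * Y ^ k * X⁻¹) := by rw [← h3]; simp only [mul_assoc]
          _ = X * Y ^ k * X⁻¹ * X ^ k := h1
          _ = X * Y ^ k * (X⁻¹ * X ^ k) := by simp only [mul_assoc]
          _ = X * (Y ^ k * X ^ k) * X⁻¹ := by rw [h4]; simp only [mul_assoc]
      simpa using h5
    · rw [h2] at h1
      have h3 : Y * Y ^ k = Y ^ k * Y := (Commute.self_pow Y k).eq
      rw [h3] at h1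
      simpa using h1
    · rw [h2] at h1
      simpa using h1
  intro φ
  have hφK : K.map (φ : ArtinGroup M →* ArtinGroup M) = K := by
    apply le_antisymm
    · rintro _ ⟨x, hx, rfl⟩
      rw [hKmem]
      intro f
      exact (hKmem x).mp hx (f.comp (φ : ArtinGroup M →* ArtinGroup M))
    · intro x hx
      refine ⟨φ.symm x, ?_, by simp⟩
      change φ.symm x ∈ K
      rw [hKmem]
      intro f
      exact (hKmem x).mp hx (f.comp (φ.symm : ArtinGroup M →* ArtinGroup M))
  let ψ : K ≃* K := (φ.subgroupMap K).trans (MulEquiv.subgroupCongr hφK)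
  apply reidemeisterInfinite_of_subgroup K φ ψ (fun x => rfl)
  apply reidemeisterInfinite_of_alt
  intro q hq h5
  obtain ⟨α, β, hαβ⟩ := alt_generators q hq h5
  obtain ⟨f, hf⟩ := free_quotient hnc α β hαβ
  exact ⟨f.comp θK.rangeRestrict, hf.comp θK.rangeRestrict_surjective⟩

end RInf

namespace RInf

section coxrep

variable {S R : Type*} [Fintype S] [DecidableEq S] [CommRing R]

/-- Entries of the Cartan-type matrix. -/
def kk (c : S → S → R) (s t : S) : R := if s = t then 2 else - c s t

/-- Rank one matrices. -/
def EE (c : S → S → R) (s t : S) : Matrix S S R :=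
  Matrix.of fun i j => if i = s then kk c t j else 0

theorem EE_mul (c : S → S → R) (s t u v : S) :
    EE c s t * EE c u v = kk c t u • EE c s v := by
  ext i j
  simp [EE, Matrix.mul_apply]

theorem EE_ne_zero (c : S → S → R) (s : S) (h2 : (2 : R) ≠ 0) : EE c s s ≠ 0 := by
  intro h
  have := congrFun (congrFun h s) s
  simp [EE, kk] at this
  exact h2 this

/-- The reflections. -/
def RR (c : S → S → R) (s : S) : Matrix S S R := 1 - EE c s s

theorem kk_self (c : S → S → R) (s : S) : kk c s s = 2 := by simp [kk]

theorem kk_ne (c : S → S → R) {s t : S} (h : s ≠ t) : kk c s t = - c s t := by simp [kk, h]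

theorem RR_sq (c : S → S → R) (s : S) : RR c s * RR c s = 1 := by
  rw [RR, mul_sub, sub_mul, sub_mul, EE_mul, kk_self, two_smul]
  simp

theorem RR_map {R' : Type*} [CommRing R'] (φ : R →+* R') (c : S → S → R) (s : S) :
    φ.mapMatrix (RR c s) = RR (fun s t => φ (c s t)) s := by
  rw [RR, RR, map_sub, map_one]
  congr 1
  ext i j
  simp only [EE, kk, RingHom.mapMatrix_apply, Matrix.map_apply, Matrix.of_apply]
  have h2 : φ 2 = 2 := map_ofNat φ 2
  split_ifs
  · exact h2
  · exact map_neg φ _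
  · exact map_zero φ

end coxrep

/-- Key quadratic relation. -/
theorem quad_rel {R A : Type*} [CommRing R] [Ring A] [Algebra R A] (P P' : A) (e : R)
    (h1 : P * P = (2 : R) • P) (h3 : P * P' * P = e • P) :
    P * ((1 - P) * (1 - P') + (1 - P') * (1 - P)) = (e - 2) • P := by
  have : P * ((1 - P) * (1 - P') + (1 - P') * (1 - P)) =
      (2 : R) • P - (2 : R) • (P * P) - (2 : R) • (P * P') + (P * P) * P' + P * P' * P := by
    simp only [two_smul]
    noncomm_ring
  rw [this, h1, h3, smul_mul_assoc, sub_smul, smul_smul]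
  have : ((2 * 2 : R)) • P = (2 : R) • P + (2 : R) • P := by rw [← add_smul]; norm_num
  rw [this]
  abel

theorem cubic_rel {R A : Type*} [CommRing R] [Ring A] [Algebra R A] (P P' : A) (e : R)
    (h1 : P * P = (2 : R) • P) (h2 : P' * P' = (2 : R) • P') (h3 : P * P' * P = e • P)
    (h4 : P' * P * P' = e • P') :
    let T := (1 - P) * (1 - P')
    (T - 1) * (T * T - (e - 2) • T + 1) = 0 := by
  intro T
  set T' := (1 - P') * (1 - P) with hT'
  have hP : (1 - P) * (1 - P) = 1 := by
    simp only [sub_mul, mul_sub, h1, two_smul]; simp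
  have hP' : (1 - P') * (1 - P') = 1 := by
    simp only [sub_mul, mul_sub, h2, two_smul]; simp
  have hTT : T' * T = 1 := by
    simp only [T, T']
    rw [mul_assoc, ← mul_assoc (1 - P) (1 - P), hP, one_mul, hP']
  have e1 : P * (T + T') = (e - 2) • P := quad_rel P P' e h1 h3
  have e2 : P' * (T + T') = (e - 2) • P' := by
    rw [add_comm]; exact quad_rel P' P e h2 h4
  have e3 : (T - 1) * (T + T') = (e - 2) • (T - 1) := by
    have : T - 1 = P * P' - P - P' := by simp only [T]; noncomm_ring
    rw [this, sub_mul, sub_mul, mul_assoc, e1, e2, mul_smul_comm, smul_sub, smul_sub]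
  have : T * T - (e - 2) • T + 1 = (T + T' - (e - 2) • 1) * T := by
    rw [sub_mul, add_mul, hTT, smul_mul_assoc, one_mul]; abel
  rw [this, ← mul_assoc, mul_sub, e3, mul_smul_comm, mul_one, sub_self, zero_mul]

theorem pow_rel {A : Type*} [Ring A] [Algebra ℂ A] (T : A) (m : ℕ) (hm : 3 ≤ m) (e : ℂ)
    (he : e = (2 * Complex.cos (Real.pi / m)) ^ 2)
    (h : (T - 1) * (T * T - (e - 2) • T + 1) = 0) : T ^ m = 1 := by
  have hm0 : m ≠ 0 := by omega
  set z : ℂ := Complex.exp (2 * Real.pi * Complex.I / m) with hz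
  have hprim : IsPrimitiveRoot z m := Complex.isPrimitiveRoot_exp m hm0
  have hz0 : z ≠ 0 := Complex.exp_ne_zero _
  have hee : e - 2 = z + z⁻¹ := by
    have h1 : e - 2 = 2 * Complex.cos (2 * (Real.pi / m)) := by
      rw [he, Complex.cos_two_mul]; ring
    rw [h1, Complex.two_cos, hz, ← Complex.exp_neg]
    congr 2 <;> ring
  have hz1 : z ≠ 1 := hprim.ne_one (by omega)
  have hzi : z⁻¹ ≠ 1 := by simpa using hz1
  have hzz : z ≠ z⁻¹ := by
    intro h
    have : z ^ 2 = 1 := by rw [sq]; nth_rewrite 2 [h]; exact mul_inv_cancel₀ hz0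
    have := (hprim.pow_eq_one_iff_dvd 2).mp this
    have := Nat.le_of_dvd (by norm_num) this
    omega
  open Polynomial in
  have hdvd : (X - C (1 : ℂ)) * ((X - C z) * (X - C z⁻¹)) ∣ (X ^ m - 1 : ℂ[X]) := by
    have hd : ∀ w : ℂ, w ^ m = 1 → (X - C w) ∣ (X ^ m - 1 : ℂ[X]) := by
      intro w hw
      rw [dvd_iff_isRoot]; simp [hw]
    have hc : ∀ w w' : ℂ, w ≠ w' → IsCoprime (X - C w) (X - C w') := fun w w' h =>
      isCoprime_X_sub_C_of_isUnit_sub (sub_ne_zero.mpr h).isUnit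
    refine IsCoprime.mul_dvd (IsCoprime.mul_right (hc _ _ hz1.symm) (hc _ _ hzi.symm))
      (hd _ (one_pow m)) (IsCoprime.mul_dvd (hc _ _ hzz) (hd _ hprim.pow_eq_one) (hd _ ?_))
    rw [inv_pow, hprim.pow_eq_one, inv_one]
  obtain ⟨q, hq⟩ := hdvd
  have h2 := congrArg (Polynomial.aeval T) hq
  have h3 : (Polynomial.aeval T) ((Polynomial.X - Polynomial.C (1 : ℂ)) *
      ((Polynomial.X - Polynomial.C z) * (Polynomial.X - Polynomial.C z⁻¹))) = 0 := by
    rw [← h]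
    simp only [map_mul, map_sub, Polynomial.aeval_X, Polynomial.aeval_C, map_one]
    congr 1
    simp only [Algebra.algebraMap_eq_smul_one, sub_mul, mul_sub, hee, add_smul, smul_mul_assoc,
      mul_smul_comm, one_mul, mul_one, smul_sub, smul_smul, inv_mul_cancel₀ hz0, one_smul]
    abel
  rw [map_mul, h3, zero_mul] at h2
  simpa [sub_eq_zero] using h2

/-- The hyperbolic case. -/
theorem pow_ne_of_hyp {A : Type*} [Ring A] [Algebra ℂ A] (P T T' : A) (e : ℝ)
    (h1 : T * T' = 1) (h2 : T' * T = 1) (he : 4 < e) (hP : P ≠ 0)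
    (h : P * (T + T') = ((e : ℂ) - 2) • P) (n : ℕ) (hn : 0 < n) : T ^ n ≠ 1 := by
  have key : ∀ n : ℕ, ∃ x y : ℝ, P * (T ^ n + T' ^ n) = (x : ℂ) • P ∧
      P * (T ^ (n + 1) + T' ^ (n + 1)) = (y : ℂ) • P ∧ 2 ≤ x ∧ x < y := by
    intro n
    induction n with
    | zero =>
      refine ⟨2, e - 2, ?_, ?_, le_refl _, by linarith⟩
      · rw [pow_zero, pow_zero, mul_add, mul_one]; push_cast; rw [two_smul]
      · simpa using h
    | succ n ih =>
      obtain ⟨x, y, hx, hy, h2x, hxy⟩ := ih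
      refine ⟨y, (e - 2) * y - x, hy, ?_, by linarith, by nlinarith⟩
      have e1 : (T ^ (n + 1 + 1) + T' ^ (n + 1 + 1)) =
          (T + T') * (T ^ (n + 1) + T' ^ (n + 1)) - (T ^ n + T' ^ n) := by
        rw [add_mul, mul_add, mul_add, ← pow_succ', ← pow_succ', pow_succ' T n, pow_succ' T' n,
          ← mul_assoc T T', ← mul_assoc T' T, h1, h2, one_mul, one_mul]
        simp only [pow_succ']
        abel
      rw [e1, mul_sub, ← mul_assoc, h, smul_mul_assoc, hy, hx, smul_smul, ← sub_smul]
      push_cast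
      rfl
  intro hT
  obtain ⟨n, rfl⟩ : ∃ k, n = k + 1 := ⟨n - 1, by omega⟩
  obtain ⟨x, y, -, hy, h2x, hxy⟩ := key n
  have hT' : T' ^ (n + 1) = 1 := by
    have hc : Commute T T' := by rw [Commute, SemiconjBy, h1, h2]
    have := hc.mul_pow (n + 1)
    rw [h1, one_pow, hT, one_mul] at this
    exact this.symm
  rw [hT, hT', mul_add, mul_one, ← two_smul ℂ, ← sub_eq_zero, ← sub_smul] at hy
  rcases smul_eq_zero.mp hy with h0 | h0
  · rw [sub_eq_zero] at h0
    have : (2 : ℝ) = y := by exact_mod_cast h0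
    linarith
  · exact hP h0

end RInf

namespace RInf

/-- The coefficients `2 cos (π / m)`. -/
noncomputable def cc {S : Type*} (M : S → S → ℕ) (s t : S) : ℂ :=
  2 * Complex.cos (Real.pi / (M s t : ℕ))

theorem cc_integral {S : Type*} (M : S → S → ℕ) (s t : S) : IsIntegral ℤ (cc M s t) := by
  have := Complex.isIntegral_two_mul_cos_rat_mul_pi (1 / (M s t : ℚ))
  have e : cc M s t = 2 * Complex.cos (((1 / (M s t : ℚ) : ℚ) : ℂ) * Real.pi) := by
    rw [cc]
    congr 2
    push_cast
    ring
  rw [e]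
  exact this

theorem cc_real {S : Type*} (M : S → S → ℕ) (s t : S) :
    cc M s t = ((2 * Real.cos (Real.pi / (M s t : ℕ)) : ℝ) : ℂ) := by
  simp [cc]

theorem cos_bound (m : ℕ) (h : m = 0 ∨ 6 ≤ m) : 3 / 2 ≤ 2 * Real.cos (Real.pi / m) := by
  have h1 : Real.cos (Real.pi / 6) ≤ Real.cos (Real.pi / m) := by
    have hpi := Real.pi_pos
    apply Real.cos_le_cos_of_nonneg_of_le_pi
    · positivity
    · linarith
    · rcases h with rfl | h
      · simp; positivity
      · have : (6 : ℝ) ≤ m := by exact_mod_cast h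
        gcongr
  rw [Real.cos_pi_div_six] at h1
  have : (3 / 2 : ℝ) ≤ √3 := Real.le_sqrt_of_sq_le (by norm_num)
  linarith

theorem RR_rel {S : Type*} [Fintype S] [DecidableEq S] (M : S → S → ℕ)
    (hsymm : ∀ s t, M s t = M t s) (s t : S) (hst : s ≠ t) (hm : 3 ≤ M s t) :
    (RR (cc M) s * RR (cc M) t) ^ M s t = 1 := by
  have hc : cc M t s = cc M s t := by simp [cc, hsymm t s]
  apply pow_rel _ _ hm ((cc M s t) ^ 2) (by simp [cc])
  apply cubic_rel
  · rw [EE_mul, kk_self]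
  · rw [EE_mul, kk_self]
  · rw [EE_mul, smul_mul_assoc, EE_mul, smul_smul, kk_ne _ hst, kk_ne _ hst.symm, hc]
    congr 1; ring
  · rw [EE_mul, smul_mul_assoc, EE_mul, smul_smul, kk_ne _ hst, kk_ne _ hst.symm, hc]
    congr 1; ring

theorem RR_ne {S : Type*} [Fintype S] [DecidableEq S] (M : S → S → ℕ)
    (hsymm : ∀ s t, M s t = M t s) (hx : ∀ s t, s ≠ t → M s t = 0 ∨ 6 ≤ M s t)
    (a b c : S) (hab : a ≠ b) (hac : a ≠ c) (hbc : b ≠ c) (n : ℕ) (hn : 0 < n) :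
    (RR (cc M) a * (RR (cc M) b * RR (cc M) c * RR (cc M) b)) ^ n ≠ 1 := by
  have hc : ∀ s t, cc M t s = cc M s t := fun s t => by simp [cc, hsymm t s]
  set x := 2 * Real.cos (Real.pi / M a b) with hxd
  set y := 2 * Real.cos (Real.pi / M a c) with hyd
  set z := 2 * Real.cos (Real.pi / M b c) with hzd
  have hx1 : 3 / 2 ≤ x := cos_bound _ (hx a b hab)
  have hy1 : 3 / 2 ≤ y := cos_bound _ (hx a c hac)
  have hz1 : 3 / 2 ≤ z := cos_bound _ (hx b c hbc)
  have ex : cc M a b = (x : ℂ) := cc_real M a b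
  have ey : cc M a c = (y : ℂ) := cc_real M a c
  have ez : cc M b c = (z : ℂ) := cc_real M b c
  have hsq : ∀ s, RR (cc M) s * RR (cc M) s = 1 := RR_sq _
  set A := RR (cc M) a with hA
  set B := RR (cc M) b with hB
  set C := RR (cc M) c with hC
  have hBCB : (B * C * B) * (B * C * B) = 1 := by
    calc (B * C * B) * (B * C * B) = B * C * (B * B) * C * B := by noncomm_ring
      _ = B * (C * C) * B := by rw [hsq]; noncomm_ring
      _ = 1 := by rw [hsq, mul_one, hsq]
  have hP'' : B * C * B = 1 - B * EE (cc M) c c * B := by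
    rw [hC, RR, mul_sub, sub_mul, mul_one, hsq]
  have hy0 : 4 < (y + x * z) ^ 2 := by
    have : 9 / 4 ≤ x * z := by nlinarith
    nlinarith
  apply pow_ne_of_hyp (EE (cc M) a a) (A * (B * C * B)) ((B * C * B) * A) ((y + x * z) ^ 2)
    _ _ hy0 (EE_ne_zero _ _ two_ne_zero) _ n hn
  · rw [mul_assoc, ← mul_assoc (B * C * B), hBCB, one_mul, hsq]
  · rw [mul_assoc, ← mul_assoc A, hsq, one_mul, hBCB]
  · rw [hP'', hA, RR]
    refine quad_rel _ _ _ ?_ ?_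
    · rw [EE_mul, kk_self]
    · rw [hB, RR]
      simp only [sub_mul, mul_sub, one_mul, mul_one, EE_mul, smul_mul_assoc, mul_smul_comm,
        smul_smul, ← sub_smul]
      congr 1
      rw [kk_ne _ hac, kk_ne _ hac.symm, kk_ne _ hab, kk_ne _ hab.symm, kk_ne _ hbc,
        kk_ne _ hbc.symm, hc a c, hc a b, hc b c, ex, ey, ez]
      push_cast
      ring

universe u

theorem exists_finite_quotient {S : Type u} [Fintype S] (M : S → S → ℕ)
    (hsymm : ∀ s t, M s t = M t s) (hx : ∀ s t, s ≠ t → M s t = 0 ∨ 6 ≤ M s t)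
    (a b c : S) (hab : a ≠ b) (hac : a ≠ c) (hbc : b ≠ c) (n : ℕ) (hn : 0 < n) :
    ∃ (Q : Type u) (_ : Group Q) (_ : Finite Q) (r : S → Q), (∀ s, r s * r s = 1) ∧
      (∀ s t, s ≠ t → 2 ≤ M s t → (r s * r t) ^ M s t = 1) ∧
      (r a * (r b * r c * r b)) ^ n ≠ 1 := by
  classical
  let X : Set ℂ := Set.range (fun p : S × S => cc M p.1 p.2)
  let A := Algebra.adjoin ℤ X
  have hfin : Module.Finite ℤ A := Algebra.finite_adjoin_of_finite_of_isIntegral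
    (Set.finite_range _) (by rintro _ ⟨p, rfl⟩; exact cc_integral M p.1 p.2)
  have hintg : ∀ x : A, IsIntegral ℤ x := fun x => Algebra.IsIntegral.isIntegral x
  let d : S → S → A := fun s t => ⟨cc M s t, Algebra.subset_adjoin ⟨(s, t), rfl⟩⟩
  let ι : A →+* ℂ := A.val.toRingHom
  have hι : Function.Injective ι := Subtype.val_injective
  have hιM : Function.Injective (ι.mapMatrix : Matrix S S A →+* Matrix S S ℂ) :=
    fun P P' h => Matrix.map_injective hι h
  have hd : ∀ s, ι.mapMatrix (RR d s) = RR (cc M) s := fun s => RR_map ι d s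
  have hrelA : ∀ s t, s ≠ t → 2 ≤ M s t → (RR d s * RR d t) ^ M s t = 1 := by
    intro s t hst hm
    apply hιM
    rw [map_pow, map_mul, hd, hd, map_one]
    exact RR_rel M hsymm s t hst (by rcases hx s t hst with h | h <;> omega)
  set U := (RR d a * (RR d b * RR d c * RR d b)) ^ n with hU
  have hUne : U ≠ 1 := by
    intro h
    have h1 := congrArg ι.mapMatrix h
    rw [hU, map_pow, map_mul, map_mul, map_mul, hd, hd, hd, map_one] at h1
    exact RR_ne M hsymm hx a b c hab hac hbc n hn h1
  obtain ⟨i, j, hij⟩ : ∃ i j, U i j ≠ (1 : Matrix S S A) i j := by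
    by_contra! h
    exact hUne (Matrix.ext h)
  set δ := U i j - (1 : Matrix S S A) i j with hδ
  have hδ0 : δ ≠ 0 := sub_ne_zero.mpr hij
  obtain ⟨N, hN0, hNd⟩ : ∃ N : ℤ, N ≠ 0 ∧ δ ∣ (N : A) := by
    have h1 := Ideal.comap_ne_bot_of_integral_mem (R := ℤ) (I := Ideal.span {δ}) hδ0
      (Ideal.mem_span_singleton_self δ) (hintg δ)
    obtain ⟨N, hN, hN0⟩ := Submodule.exists_mem_ne_zero_of_ne_bot h1
    refine ⟨N, hN0, ?_⟩
    have h2 := Ideal.mem_comap.mp hN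
    rw [Ideal.mem_span_singleton] at h2
    simpa using h2
  let I : Ideal A := Ideal.span {((2 * N : ℤ) : A)}
  have hδI : δ ∉ I := by
    intro h
    have h1 : ((2 * N : ℤ) : A) ∣ (N : A) := (Ideal.mem_span_singleton.mp h).trans hNd
    obtain ⟨w, hw⟩ := h1
    have hN0' : (N : A) ≠ 0 := by exact_mod_cast hN0
    have h2 : (2 : A) * w = 1 := by
      apply mul_left_cancel₀ hN0'
      rw [mul_one]
      conv_rhs => rw [hw]
      push_cast; ring
    have h3 : ι w = ((1 / 2 : ℚ) : ℂ) := by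
      have := congrArg ι h2
      rw [map_mul, map_ofNat, map_one] at this
      push_cast
      field_simp
      rw [mul_comm]; exact this
    have h4 : IsIntegral ℤ ((1 / 2 : ℚ) : ℂ) := by
      rw [← h3]; exact (hintg w).map A.val
    have h5 : IsIntegral ℤ (1 / 2 : ℚ) :=
      (isIntegral_algebraMap_iff (B := ℂ) (algebraMap ℚ ℂ).injective).mp h4
    obtain ⟨k, hk⟩ := IsIntegrallyClosed.isIntegral_iff.mp h5
    have : (k : ℚ) = 1 / 2 := hk
    have h6 : ((2 * k : ℤ) : ℚ) = 1 := by push_cast; rw [this]; norm_num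
    have : 2 * k = 1 := by exact_mod_cast h6
    omega
  have hfinQ : Finite (A ⧸ I) := by
    have hf : Module.Finite ℤ (A ⧸ I) :=
      Module.Finite.of_surjective ((Ideal.Quotient.mk I).toAddMonoidHom.toIntLinearMap)
        Ideal.Quotient.mk_surjective
    apply Module.finite_of_fg_torsion (A ⧸ I)
    intro x
    obtain ⟨y, rfl⟩ := Ideal.Quotient.mk_surjective x
    refine ⟨⟨2 * N, mem_nonZeroDivisors_of_ne_zero (by omega)⟩, ?_⟩
    change (2 * N : ℤ) • Ideal.Quotient.mk I y = 0
    rw [← map_zsmul, Ideal.Quotient.eq_zero_iff_mem, zsmul_eq_mul]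
    exact Ideal.mul_mem_right _ _ (Ideal.mem_span_singleton_self _)
  let π := Ideal.Quotient.mk I
  let ρ : S → (Matrix S S (A ⧸ I))ˣ := fun s =>
    ⟨π.mapMatrix (RR d s), π.mapMatrix (RR d s), by rw [← map_mul, RR_sq, map_one],
      by rw [← map_mul, RR_sq, map_one]⟩
  have hfinM : Finite (Matrix S S (A ⧸ I)) := inferInstanceAs (Finite (S → S → A ⧸ I))
  refine ⟨(Matrix S S (A ⧸ I))ˣ, inferInstance, inferInstance, ρ, ?_, ?_, ?_⟩
  · intro s
    apply Units.ext
    change π.mapMatrix (RR d s) * π.mapMatrix (RR d s) = 1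
    rw [← map_mul, RR_sq, map_one]
  · intro s t hst hm
    apply Units.ext
    rw [Units.val_pow_eq_pow_val]
    change (π.mapMatrix (RR d s) * π.mapMatrix (RR d t)) ^ M s t = 1
    rw [← map_mul, ← map_pow, hrelA s t hst hm, map_one]
  · intro h
    have h1 := congrArg Units.val h
    rw [Units.val_pow_eq_pow_val] at h1
    change (π.mapMatrix (RR d a) * (π.mapMatrix (RR d b) * π.mapMatrix (RR d c) *
      π.mapMatrix (RR d b))) ^ n = 1 at h1
    rw [← map_mul, ← map_mul, ← map_mul, ← map_pow, ← hU, ← map_one π.mapMatrix] at h1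
    have h2 := congrFun (congrFun h1 i) j
    exact hδI (Ideal.Quotient.eq.mp h2)

end RInf

/-- An Artin group of XXXL type (all finite labels at least `6`, at least 3 generators)
whose presentation graph is twistless has property `R_∞`. -/
theorem xxxlType_twistless_propertyRInfinity
    {S : Type*} [Fintype S] (hcard : 3 ≤ Fintype.card S)
    (M : S → S → ℕ) (hM : IsCoxeterMatrix M)
    (hxxxl : ∀ s t : S, s ≠ t → M s t = 0 ∨ 6 ≤ M s t)
    (htw : Twistless (presGraph M)) :
    PropertyRInfinity (ArtinGroup M) := by
  classical
  obtain ⟨a, b, c, hab, hac, hbc⟩ := Fintype.two_lt_card_iff.mp hcard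
  let L : ℕ := ∏ p : S × S, if M p.1 p.2 = 0 then 1 else M p.1 p.2
  have hL0 : 0 < L := by
    apply Finset.prod_pos
    intro p _
    split_ifs with h
    · exact one_pos
    · exact Nat.pos_of_ne_zero h
  have hL : ∀ s t, s ≠ t → 2 ≤ M s t → M s t ∣ L := by
    intro s t _ h
    have h1 := Finset.dvd_prod_of_mem
      (fun p : S × S => if M p.1 p.2 = 0 then 1 else M p.1 p.2) (Finset.mem_univ (s, t))
    simp only at h1
    rwa [if_neg (by omega)] at h1
  obtain ⟨Q, _, _, r, hinv, hrel, hne⟩ :=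
    RInf.exists_finite_quotient M hM.1 hxxxl a b c hab hac hbc L hL0
  exact RInf.artin_of_finite_quotient M r hinv hrel L hL a b c hne
end
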